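/- arXiv:1401.5560 — 2 statements merged into one kernel-verified Lean document; each statement's English description precedes it below -/
import Mathlib

section
/- Let p be a prime and G a finite group such that gcd(|G|, (p−1)(p²−1)⋯(pⁿ−1)) = 1 for some integer n ≥ 1. Then G is p-nilpotent if and only if G has a normal subgroup E such that G/E is p-nilpotent and, for some Sylow p-subgroup P of E, every n-maximal subgroup of P (if any exists) either has a p-nilpotent supplement in G or is 𝔘ₛ-quasinormal in G. -/
open scoped Pointwise

universe u

/-- `M` is a maximal subgroup of `K` (within the subgroup lattice of the ambient group). -/
def IsMaximalIn {G : Type*} [Group G] (M K : Subgroup G) : Prop :=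
  M < K ∧ ∀ L : Subgroup G, M < L → L ≤ K → L = K

/-- `P` is a Sylow `p`-subgroup of the subgroup `E`. -/
def IsSylowIn {G : Type*} [Group G] (p : ℕ) (P E : Subgroup G) : Prop :=
  P ≤ E ∧ IsPGroup p P ∧ ¬ p ∣ (P.subgroupOf E).index

/-- `H` is s-permutable in `G`: it permutes with every Sylow subgroup of `G`. -/
def SPermutable {G : Type*} [Group G] (H : Subgroup G) : Prop :=
  ∀ q : ℕ, q.Prime → ∀ Q : Subgroup G, IsSylowIn q Q ⊤ →
    (H : Set G) * (Q : Set G) = (Q : Set G) * (H : Set G)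

/-- `A/B` is a chief factor of the ambient group. -/
def IsChiefFactor {G : Type*} [Group G] (A B : Subgroup G) : Prop :=
  A.Normal ∧ B.Normal ∧ B < A ∧ ∀ L : Subgroup G, L.Normal → B < L → L < A → False

/-- The 𝔘-hypercenter: the product of all normal subgroups `N` such that every chief
factor `A/B` with `A ≤ N` has prime order. -/
def UHypercenter (G : Type*) [Group G] : Subgroup G :=
  sSup {N : Subgroup G | N.Normal ∧
    ∀ A B : Subgroup G, IsChiefFactor A B → A ≤ N → (B.relIndex A).Prime}

/-- The 𝔖-hypercenter: the product of all normal subgroups `N` such that every chief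
factor `A/B` with `A ≤ N` is abelian with `G/C_G(A/B)` soluble. -/
def SHypercenter (G : Type*) [Group G] : Subgroup G :=
  sSup {N : Subgroup G | N.Normal ∧
    ∀ A B : Subgroup G, IsChiefFactor A B → A ≤ N →
      (∀ a ∈ A, ∀ b ∈ A, a * b * a⁻¹ * b⁻¹ ∈ B) ∧
      ∃ C : Subgroup G, ∃ _ : C.Normal,
        (∀ g : G, g ∈ C ↔ ∀ h ∈ A, g * h * g⁻¹ * h⁻¹ ∈ B) ∧ IsSolvable (G ⧸ C)}

/-- `H` is 𝔘ₛ-quasinormal in `G`. -/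
def UsQuasinormal {G : Type*} [Group G] (H : Subgroup G) : Prop :=
  ∃ T : Subgroup G, T.Normal ∧ SPermutable (H ⊔ T) ∧
    ∀ x ∈ H ⊓ T,
      (QuotientGroup.mk x : G ⧸ H.normalCore) ∈ UHypercenter (G ⧸ H.normalCore)

/-- `H` is 𝔖ₛ-quasinormal in `G`. -/
def SsQuasinormal {G : Type*} [Group G] (H : Subgroup G) : Prop :=
  ∃ T : Subgroup G, T.Normal ∧ SPermutable (H ⊔ T) ∧
    ∀ x ∈ H ⊓ T,
      (QuotientGroup.mk x : G ⧸ H.normalCore) ∈ SHypercenter (G ⧸ H.normalCore)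

/-- A group is supersoluble if it has a chain of subgroups, each normal in the whole
group, reaching from `⊥` to `⊤`, with all successive factors cyclic. -/
def IsSupersoluble (G : Type*) [Group G] : Prop :=
  ∃ (k : ℕ) (c : Fin (k + 1) → Subgroup G),
    c 0 = ⊥ ∧ c (Fin.last k) = ⊤ ∧ (∀ i, (c i).Normal) ∧
    (∀ i : Fin k, c i.castSucc ≤ c i.succ) ∧
    ∀ i : Fin k, ∃ g ∈ c i.succ, ∀ x ∈ c i.succ, ∃ m : ℤ, x⁻¹ * g ^ m ∈ c i.castSucc

/-- `A` is subnormal in `G`. -/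
def IsSubnormal {G : Type*} [Group G] (A : Subgroup G) : Prop :=
  ∃ (n : ℕ) (c : Fin (n + 1) → Subgroup G), c 0 = A ∧ c (Fin.last n) = ⊤ ∧
    ∀ i : Fin n, c i.castSucc ≤ c i.succ ∧
      ∀ x ∈ c i.succ, ∀ a ∈ c i.castSucc, x * a * x⁻¹ ∈ c i.castSucc

/-- `H` has a supersoluble supplement in the ambient group. -/
def HasSupersolubleSupplement {G : Type*} [Group G] (H : Subgroup G) : Prop :=
  ∃ T : Subgroup G, IsSupersoluble T ∧ (H : Set G) * (T : Set G) = Set.univ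

/-- A group is `p`-nilpotent if it has a normal subgroup of order prime to `p`
and of `p`-power index (a normal `p`-complement). -/
def IsPNilpotent (p : ℕ) (G : Type*) [Group G] : Prop :=
  ∃ N : Subgroup G, N.Normal ∧ Nat.Coprime (Nat.card N) p ∧ ∃ k : ℕ, N.index = p ^ k

/-- `H` has a `p`-nilpotent supplement in the ambient group. -/
def HasPNilpotentSupplement {G : Type*} [Group G] (p : ℕ) (H : Subgroup G) : Prop :=
  ∃ T : Subgroup G, IsPNilpotent p T ∧ (H : Set G) * (T : Set G) = Set.univ

/-- `H` is an `n`-maximal subgroup of `P`: there is a chain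
`H = Hₙ < ⋯ < H₁ < H₀ = P` with each term maximal in the preceding one. -/
def IsNMaximalIn {G : Type*} [Group G] (n : ℕ) (H P : Subgroup G) : Prop :=
  ∃ c : Fin (n + 1) → Subgroup G, c 0 = P ∧ c (Fin.last n) = H ∧
    ∀ i : Fin n, IsMaximalIn (c i.succ) (c i.castSucc)

/-- A group is quasinilpotent if every element induces an inner automorphism
on every chief factor. -/
def IsQuasinilpotentGroup (G : Type*) [Group G] : Prop :=
  ∀ A B : Subgroup G, IsChiefFactor A B →
    ∀ x : G, ∃ y ∈ A, ∀ h ∈ A, (x * h * x⁻¹) * (y * h * y⁻¹)⁻¹ ∈ B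

/-- The generalized Fitting subgroup: the product of all normal quasinilpotent
subgroups. -/
def generalizedFitting (G : Type*) [Group G] : Subgroup G :=
  sSup {N : Subgroup G | N.Normal ∧ IsQuasinilpotentGroup N}

/-- The generalized Fitting subgroup of a subgroup `H`, as a subgroup of `G`. -/
def FStarIn {G : Type*} [Group G] (H : Subgroup G) : Subgroup G :=
  (generalizedFitting H).map H.subtype

/-- The Fitting subgroup: the product of all nilpotent normal subgroups. -/
def fittingSubgroup (G : Type*) [Group G] : Subgroup G :=
  sSup {N : Subgroup G | N.Normal ∧ Group.IsNilpotent N}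

/-- The Fitting subgroup of a subgroup `H`, as a subgroup of `G`. -/
def FittingIn {G : Type*} [Group G] (H : Subgroup G) : Subgroup G :=
  (fittingSubgroup H).map H.subtype

open scoped commutatorElement
set_option linter.all false

/-- subgroup generated by p'-elements -/
def OpP (p : ℕ) (G : Type*) [Group G] : Subgroup G :=
  Subgroup.closure {x : G | (orderOf x).Coprime p}

lemma OpP_normal (p : ℕ) (G : Type*) [Group G] : (OpP p G).Normal := by
  refine ⟨fun n hn g => ?_⟩
  have : (OpP p G) ≤ (OpP p G).comap (MulAut.conj g).toMonoidHom := by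
    refine (Subgroup.closure_le _).2 fun x hx => ?_
    refine Subgroup.subset_closure ?_
    have : orderOf ((MulAut.conj g) x) = orderOf x := (MulAut.conj g).orderOf_eq x
    change (orderOf ((MulAut.conj g) x)).Coprime p
    rw [this]; exact hx
  exact this hn

lemma top_of_sylow {X : Type*} [Group X] [Finite X] (K : Subgroup X)
    (h : ∀ q : ℕ, q.Prime → ∃ Q : Sylow q X, (Q : Subgroup X) ≤ K) : K = ⊤ := by
  by_contra hK
  have h1 : K.index ≠ 1 := fun h => hK (Subgroup.index_eq_one.1 h)
  obtain ⟨q, hq, hd⟩ := Nat.exists_prime_and_dvd h1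
  obtain ⟨Q, hQ⟩ := h q hq
  haveI := Fact.mk hq
  exact Q.not_dvd_index (hd.trans (Subgroup.index_dvd_of_le hQ))

lemma top_of_sylow_p {X : Type*} [Group X] [Finite X] (p : ℕ) (P : Sylow p X) (K : Subgroup X)
    (hP : (P : Subgroup X) ≤ K)
    (h : ∀ q : ℕ, q.Prime → q ≠ p → ∀ x : X, (∃ k, orderOf x = q ^ k) → x ∈ K) : K = ⊤ := by
  refine top_of_sylow K fun q hq => ?_
  by_cases hqp : q = p
  · subst hqp; exact ⟨P, hP⟩
  · haveI := Fact.mk hq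
    refine ⟨default, fun x hx => h q hq hqp x ?_⟩
    obtain ⟨k, hk⟩ := (IsPGroup.iff_orderOf.1 (default : Sylow q X).2) ⟨x, hx⟩
    exact ⟨k, by simpa using hk⟩

lemma OpP_index {G : Type*} [Group G] [Finite G] (p : ℕ) [hp : Fact p.Prime] :
    ∃ k, (OpP p G).index = p ^ k := by
  have : ∀ {q : ℕ}, q.Prime → q ∣ (OpP p G).index → q = p := by
    intro q hq hd
    by_contra hqp
    haveI := Fact.mk hq
    have hQ : ((default : Sylow q G) : Subgroup G) ≤ OpP p G := by
      intro x hx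
      refine Subgroup.subset_closure ?_
      obtain ⟨k, hk⟩ := (IsPGroup.iff_orderOf.1 (default : Sylow q G).2) ⟨x, hx⟩
      have : orderOf x = q ^ k := by simpa using hk
      rw [Set.mem_ofPred_eq, this]
      exact Nat.Coprime.pow_left _ ((Nat.coprime_primes hq hp.out).2 hqp)
    exact (default : Sylow q G).not_dvd_index (hd.trans (Subgroup.index_dvd_of_le hQ))
  exact ⟨_, Nat.eq_prime_pow_of_unique_prime_dvd Subgroup.index_ne_zero_of_finite this⟩

/-- counting lemma -/
lemma cent_of_count {X : Type*} [Group X] [Finite X] {p n q : ℕ} (hp : p.Prime) (hq : q.Prime)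
    (hqp : q ≠ p) (hqn : ∀ i, 1 ≤ i → i ≤ n → ¬ q ∣ p ^ i - 1)
    (D D0 : Subgroup X) (hD : IsPGroup p D) (g : X) (hg : ∃ k, orderOf g = q ^ k)
    (hgD : ∀ d ∈ D, g * d * g⁻¹ ∈ D) (h0 : D0 ≤ D) (hc : ∀ d ∈ D0, g * d * g⁻¹ = d)
    (hi : D0.relIndex D ∣ p ^ n) : ∀ d ∈ D, g * d * g⁻¹ = d := by
  haveI := Fact.mk hp
  haveI := Fact.mk hq
  have hz : ∀ z ∈ Subgroup.zpowers g, ∀ d ∈ D, z * d * z⁻¹ ∈ D := by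
    have : Subgroup.zpowers g ≤ Subgroup.normalizer (D : Set X) := by
      rw [Subgroup.zpowers_le]
      refine Subgroup.mem_normalizer_iff.2 fun d => ⟨fun h => hgD d h, fun h => ?_⟩
      obtain ⟨m, hm⟩ : ∃ m : D, (⟨g * m * g⁻¹, hgD m m.2⟩ : D) = ⟨g * d * g⁻¹, h⟩ := by
        have hinj : Function.Injective (fun m : D => (⟨g * m * g⁻¹, hgD m m.2⟩ : D)) := by
          intro a b hab
          simpa using hab
        exact (Finite.surjective_of_injective hinj) _
      have : (m : X) = d := by simpa using hm
      exact this ▸ m.2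
    intro z hz d hd
    exact (Subgroup.mem_normalizer_iff.1 (this hz) d).1 hd
  letI : MulAction (Subgroup.zpowers g) D :=
    { smul := fun z d => ⟨z * d * (z : X)⁻¹, hz z z.2 d d.2⟩
      one_smul := fun d => Subtype.ext (by change (1 : X) * d * (1 : X)⁻¹ = d; simp)
      mul_smul := fun a b d => Subtype.ext (by
        change ((a * b : Subgroup.zpowers g) : X) * d * ((a * b : Subgroup.zpowers g) : X)⁻¹
          = a * (b * d * (b : X)⁻¹) * (a : X)⁻¹
        push_cast; group) }
  have hsm : ∀ (z : Subgroup.zpowers g) (d : D), ((z • d : D) : X) = z * d * (z : X)⁻¹ :=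
    fun _ _ => rfl
  have hpg : IsPGroup q (Subgroup.zpowers g) := by
    obtain ⟨k, hk⟩ := hg
    exact IsPGroup.of_card (n := k) (by rw [Nat.card_zpowers, hk])
  have hmod := hpg.card_modEq_card_fixedPoints D
  let C : Subgroup D := (Subgroup.centralizer {g}).subgroupOf D
  have hfix : MulAction.fixedPoints (Subgroup.zpowers g) D = (C : Set D) := by
    ext d
    simp only [MulAction.mem_fixedPoints, SetLike.mem_coe, C, Subgroup.mem_subgroupOf,
      Subgroup.mem_centralizer_singleton_iff]
    constructor
    · intro h
      have := congrArg (Subtype.val) (h ⟨g, Subgroup.mem_zpowers g⟩)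
      rw [hsm] at this
      exact (mul_inv_eq_iff_eq_mul.1 this).symm
    · intro h z
      apply Subtype.ext
      rw [hsm]
      obtain ⟨k, hk⟩ := z.2
      have hc : Commute g (d : X) := h.symm
      have := hc.zpow_left k
      rw [mul_inv_eq_iff_eq_mul, ← hk]
      exact this
  rw [hfix] at hmod
  have hCi : C.index ∣ p ^ n := by
    refine dvd_trans ?_ hi
    refine Subgroup.index_dvd_of_le ?_
    intro d hd
    rw [Subgroup.mem_subgroupOf] at hd ⊢
    rw [Subgroup.mem_centralizer_singleton_iff]
    exact (mul_inv_eq_iff_eq_mul.1 (hc d hd)).symm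
  obtain ⟨i, hin, hi'⟩ := (Nat.dvd_prime_pow hp).1 hCi
  have hcard : Nat.card C * p ^ i = Nat.card D := by rw [← hi', Subgroup.card_mul_index]
  obtain ⟨c, hcc⟩ := (hD.to_subgroup C).exists_card_eq
  have hC2 : C.index = 1 := by
    rcases Nat.eq_zero_or_pos i with h | h
    · rw [hi', h, pow_zero]
    · exfalso
      have h1 : Nat.card C ≡ Nat.card D [MOD q] := hmod.symm
      have h2 := (Nat.modEq_iff_dvd' (by rw [← hcard]; exact Nat.le_mul_of_pos_right _ (pow_pos hp.pos _))).1 h1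
      rw [← hcard] at h2
      have h3 : Nat.card C * p ^ i - Nat.card C = p ^ c * (p ^ i - 1) := by
        rw [Nat.mul_sub, hcc, mul_one]
      have h4 : q ∣ p ^ c * (p ^ i - 1) := h3 ▸ h2
      rcases hq.dvd_mul.1 h4 with h5 | h5
      · exact hqp ((Nat.prime_dvd_prime_iff_eq hq hp).1 (hq.dvd_of_dvd_pow h5))
      · exact hqn i h hin h5
  intro d hd
  have : (⟨d, hd⟩ : D) ∈ C := by rw [Subgroup.index_eq_one.1 hC2]; trivial
  rw [Subgroup.mem_subgroupOf, Subgroup.mem_centralizer_singleton_iff] at this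
  rw [mul_inv_eq_iff_eq_mul]; exact this.symm

/-- normal step in p-groups -/
lemma pgroup_step {P : Type*} [Group P] [Finite P] {p : ℕ} [hp : Fact p.Prime] (hP : IsPGroup p P)
    (N : Subgroup P) [hN : N.Normal] (hne : N ≠ ⊥) :
    ∃ M : Subgroup P, M.Normal ∧ M ≤ N ∧ M.relIndex N = p ∧ ⁅N, (⊤ : Subgroup P)⁆ ≤ M := by
  have hle : ⁅N, (⊤ : Subgroup P)⁆ ≤ N := Subgroup.commutator_le_left N ⊤
  have hneq : ⁅N, (⊤ : Subgroup P)⁆ ≠ N := by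
    intro h
    haveI := hP.isNilpotent
    apply hne
    have hk : ∀ k, N ≤ (⊤ : Subgroup P).lowerCentralSeries k := by
      intro k
      induction k with
      | zero => simp
      | succ k ih =>
        rw [← h]
        exact Subgroup.commutator_mono ih le_rfl
    obtain ⟨k, hk'⟩ := nilpotent_iff_lowerCentralSeries.1 this
    exact eq_bot_iff.2 (hk' ▸ hk k)
  obtain ⟨m, hm⟩ := (hP.to_subgroup N).exists_card_eq
  let C := (⁅N, (⊤ : Subgroup P)⁆).subgroupOf N
  obtain ⟨a, ha⟩ := ((hP.to_subgroup N).to_subgroup C).exists_card_eq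
  have ham : a < m := by
    have h1 : Nat.card C < Nat.card N := by
      rw [Nat.card_congr (Subgroup.subgroupOfEquivOfLe hle).toEquiv]
      exact Set.Finite.card_lt_card (Set.toFinite _) (SetLike.coe_ssubset_coe.2 (lt_of_le_of_ne hle hneq))
    rw [ha, hm] at h1
    exact (Nat.pow_lt_pow_iff_right hp.out.one_lt).1 h1
  obtain ⟨K, hK, hCK⟩ := Sylow.exists_subgroup_card_pow_prime_le (G := N) p (n := a) (m := m - 1)
    (by rw [hm]; exact pow_dvd_pow _ (Nat.sub_le _ _)) C ha (by omega)
  have hsub : ⁅N, (⊤ : Subgroup P)⁆ ≤ K.map N.subtype := by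
    intro x hx
    exact ⟨⟨x, hle hx⟩, hCK (by simpa [C, Subgroup.mem_subgroupOf] using hx), rfl⟩
  have hKN : K.map N.subtype ≤ N := Subgroup.map_subtype_le K
  refine ⟨K.map N.subtype, ⟨fun x hx g => ?_⟩, hKN, ?_, hsub⟩
  · have h1 : ⁅x, g⁆ ∈ ⁅N, (⊤ : Subgroup P)⁆ := Subgroup.commutator_mem_commutator (hKN hx) (Subgroup.mem_top g)
    have h2 : ⁅x, g⁆⁻¹ * x ∈ K.map N.subtype := mul_mem (inv_mem (hsub h1)) hx
    have h3 : ⁅x, g⁆⁻¹ * x = g * x * g⁻¹ := by rw [commutatorElement_def]; group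
    rwa [h3] at h2
  · have h1 : (K.map N.subtype).subgroupOf N = K :=
      Subgroup.comap_map_eq_self_of_injective N.subtype_injective K
    rw [Subgroup.relIndex, h1]
    have h2 := K.card_mul_index
    rw [hK, hm] at h2
    have h3 : p ^ m = p ^ (m - 1) * p := by rw [← pow_succ]; congr 1; omega
    rw [h3] at h2
    exact Nat.eq_of_mul_eq_mul_left (pow_pos hp.out.pos _) h2

lemma hom_kill {X : Type*} [Group X] {p : ℕ} [Fact p.Prime] (φ : X →* Multiplicative (ZMod p))
    {x : X} (hx : (orderOf x).Coprime p) : φ x = 1 := by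
  rw [← orderOf_eq_one_iff]
  have h1 : orderOf (φ x) ∣ orderOf x := orderOf_map_dvd φ x
  have h2 : orderOf (φ x) ∣ p := by
    have := orderOf_dvd_natCard (φ x)
    simpa [Nat.card_zmod] using this
  exact Nat.eq_one_of_dvd_coprimes hx h1 h2

lemma pow_ne_one_of_coprime {p m : ℕ} [hp : Fact p.Prime] (hm : ¬ p ∣ m) (a : Multiplicative (ZMod p))
    (ha : a ≠ 1) : a ^ m ≠ 1 := by
  intro h
  apply ha
  rw [← orderOf_eq_one_iff]
  have h2 : orderOf a ∣ p := by
    have := orderOf_dvd_natCard a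
    simpa [Nat.card_zmod] using this
  have hc : Nat.Coprime m p := ((Nat.Prime.coprime_iff_not_dvd hp.out).2 hm).symm
  exact Nat.eq_one_of_dvd_coprimes hc (orderOf_dvd_of_pow_eq_one h) h2

lemma tate_aux {L : Type*} [Group L] [Finite L] {p : ℕ} [hp : Fact p.Prime] (P : Sylow p L)
    (K : Subgroup L) [hK : K.Normal] (hdvd : p ∣ Nat.card K) :
    ∃ Λ : L → Multiplicative (ZMod p),
      (∀ x y, x ∈ P → x ∈ K → y ∈ P → y ∈ K → Λ (x * y) = Λ x * Λ y) ∧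
      (∀ u x, u ∈ P → x ∈ P → x ∈ K → Λ (u * x * u⁻¹) = Λ x) ∧
      ∃ x, x ∈ P ∧ x ∈ K ∧ Λ x ≠ 1 := by
  classical
  let D : Subgroup P := K.subgroupOf P
  haveI : D.Normal := inferInstance
  have hD : D ≠ ⊥ := by
    obtain ⟨x, hx⟩ := exists_prime_orderOf_dvd_card' p hdvd
    have hx' : orderOf (x : L) = p := by simpa using hx
    have hpg : IsPGroup p (Subgroup.zpowers (x : L)) :=
      IsPGroup.of_card (n := 1) (by rw [Nat.card_zpowers, hx', pow_one])
    obtain ⟨Q, hQ⟩ := hpg.exists_le_sylow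
    obtain ⟨g, hg⟩ := MulAction.exists_smul_eq L Q P
    have hxP : g * x * g⁻¹ ∈ P := by
      rw [← hg]
      change _ ∈ ((g • Q : Sylow p L) : Subgroup L)
      rw [Sylow.coe_subgroup_smul]
      have := Subgroup.smul_mem_pointwise_smul (x : L) (MulAut.conj g) (Q : Subgroup L)
        (hQ (Subgroup.mem_zpowers _))
      simpa using this
    intro hb
    have h1 : (⟨g * x * g⁻¹, hxP⟩ : P) ∈ D := by
      rw [Subgroup.mem_subgroupOf]; exact hK.conj_mem x x.2 g
    rw [hb, Subgroup.mem_bot] at h1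
    have h2 : g * x * g⁻¹ = 1 := congrArg Subtype.val h1
    have h3 : (x : L) = 1 := by
      have := congrArg (fun y => g⁻¹ * y * g) h2
      simpa [mul_assoc] using this
    rw [h3, orderOf_one] at hx'
    exact hp.out.one_lt.ne hx'
  obtain ⟨M, hMn, hMD, hMi, hMc⟩ := pgroup_step P.2 D hD
  have hcard : Nat.card (D ⧸ M.subgroupOf D) = p := by
    rw [← Subgroup.index_eq_card]; exact hMi
  have hcard2 : Nat.card (Multiplicative (ZMod p)) = p := by simp [Nat.card_zmod]
  let e : (D ⧸ M.subgroupOf D) ≃* Multiplicative (ZMod p) := mulEquivOfPrimeCardEq hcard hcard2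
  let l : D →* Multiplicative (ZMod p) := e.toMonoidHom.comp (QuotientGroup.mk' _)
  have hl : ∀ d : D, l d = 1 ↔ (d : P) ∈ M := by
    intro d
    change e (QuotientGroup.mk d) = 1 ↔ _
    rw [map_eq_one_iff e e.injective, QuotientGroup.eq_one_iff, Subgroup.mem_subgroupOf]
  obtain ⟨Λ, hΛ⟩ : ∃ Λ : L → Multiplicative (ZMod p), ∀ x (h1 : x ∈ P) (h2 : x ∈ K),
      Λ x = l ⟨⟨x, h1⟩, Subgroup.mem_subgroupOf.2 h2⟩ :=
    ⟨fun x => if h : x ∈ P ∧ x ∈ K then l ⟨⟨x, h.1⟩, Subgroup.mem_subgroupOf.2 h.2⟩ else 1,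
      fun x h1 h2 => dif_pos ⟨h1, h2⟩⟩
  refine ⟨Λ, ?_, ?_, ?_⟩
  · intro x y h1 h2 h3 h4
    rw [hΛ _ (mul_mem h1 h3) (mul_mem h2 h4), hΛ _ h1 h2, hΛ _ h3 h4, ← map_mul]
    rfl
  · intro u x hu h1 h2
    have hc : u * x * u⁻¹ ∈ P ∧ u * x * u⁻¹ ∈ K :=
      ⟨mul_mem (mul_mem hu h1) (inv_mem hu), hK.conj_mem x h2 u⟩
    rw [hΛ _ hc.1 hc.2, hΛ _ h1 h2, ← mul_inv_eq_one, ← map_inv, ← map_mul, hl]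
    apply hMc
    have := Subgroup.commutator_mem_commutator (H₁ := D) (H₂ := ⊤) (g₁ := (⟨x, h1⟩ : P)⁻¹)
      (g₂ := ⟨u, hu⟩) (inv_mem (show (⟨x, h1⟩ : P) ∈ D from h2)) (Subgroup.mem_top _)
    have h5 := Subgroup.Normal.conj_mem (inferInstance : (⁅D, (⊤ : Subgroup P)⁆).Normal) _ this ⟨x, h1⟩
    convert h5 using 1
    apply Subtype.ext
    simp [commutatorElement_def, mul_assoc]
  · by_contra hno
    push Not at hno
    have : D ≤ M := by
      intro d hd
      have := hno d d.2 hd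
      rw [hΛ _ d.2 hd] at this
      exact (hl _).1 this
    have := Subgroup.relIndex_eq_one.2 this
    rw [hMi] at this
    exact hp.out.one_lt.ne' this

theorem tate {L : Type*} [Group L] [Finite L] {p : ℕ} [hp : Fact p.Prime] (P : Sylow p L)
    (hext : ∀ f : P →* Multiplicative (ZMod p), ∃ φ : L →* Multiplicative (ZMod p),
      ∀ x : P, φ x = f x) : (Nat.card (OpP p L)).Coprime p := by
  classical
  by_contra hcop
  have hdvd : p ∣ Nat.card (OpP p L) := by
    by_contra h
    exact hcop ((Nat.Prime.coprime_iff_not_dvd hp.out).2 h).symm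
  let K := OpP p L
  haveI hK : K.Normal := OpP_normal p L
  obtain ⟨Λ, hmul, hinv, x0, hx0P, hx0K, hx0⟩ := tate_aux P K hdvd
  have hΛ1 : Λ 1 = 1 := by
    have := hmul 1 1 (one_mem _) (one_mem _) (one_mem _) (one_mem _)
    simpa using this
  have hΛinv : ∀ x, x ∈ P → x ∈ K → Λ (x⁻¹) = (Λ x)⁻¹ := by
    intro x h1 h2
    have := hmul x⁻¹ x (inv_mem h1) (inv_mem h2) h1 h2
    rw [inv_mul_cancel, hΛ1] at this
    exact (eq_inv_of_mul_eq_one_left this.symm)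
  have htop : K ⊔ P = ⊤ := by
    refine top_of_sylow_p p P _ le_sup_right fun q hq hqp x hx => ?_
    refine (le_sup_left : K ≤ _) (Subgroup.subset_closure ?_)
    obtain ⟨k, hk⟩ := hx
    rw [Set.mem_ofPred_eq, hk]
    exact Nat.Coprime.pow_left _ ((Nat.coprime_primes hq hp.out).2 hqp)
  have hsec : ∀ q : L ⧸ (P : Subgroup L), ∃ t : L, t ∈ K ∧ (QuotientGroup.mk t : L ⧸ (P : Subgroup L)) = q := by
    intro q
    induction q using QuotientGroup.induction_on with
    | H g =>
      have hg : g ∈ K ⊔ P := by rw [htop]; trivial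
      obtain ⟨k, hk, u, hu, rfl⟩ := Subgroup.mem_sup_of_normal_left.1 hg
      exact ⟨k, hk, QuotientGroup.eq.2 (by simpa using hu)⟩
  choose t htK htq using hsec
  letI := Fintype.ofFinite (L ⧸ (P : Subgroup L))
  have hmem : ∀ (g : L) (q : L ⧸ (P : Subgroup L)), (t (g • q))⁻¹ * g * t q ∈ P := by
    intro g q
    have : (QuotientGroup.mk (t (g • q)) : L ⧸ (P : Subgroup L)) = QuotientGroup.mk (g * t q) := by
      rw [htq]
      conv_lhs => rw [← htq q]
      rfl
    have := QuotientGroup.eq.1 this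
    rwa [← mul_assoc] at this
  have hmemK : ∀ (u : L) (q : L ⧸ (P : Subgroup L)), ((t (u • q))⁻¹ * u * t q)⁻¹ * u ∈ K := by
    intro u q
    have h1 : u⁻¹ * t (u • q) * u ∈ K := by
      simpa using hK.conj_mem _ (htK (u • q)) u⁻¹
    have h2 := mul_mem (inv_mem (htK q)) h1
    convert h2 using 1
    group
  -- the homomorphism h on P
  let h : P →* Multiplicative (ZMod p) :=
    { toFun := fun u => ∏ q : L ⧸ (P : Subgroup L), Λ (((t ((u : L) • q))⁻¹ * u * t q)⁻¹ * u)
      map_one' := by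
        refine Finset.prod_eq_one fun q _ => ?_
        simp [hΛ1]
      map_mul' := by
        intro u v
        have e1 : ∏ q : L ⧸ (P : Subgroup L), Λ (((t ((u : L) • q))⁻¹ * u * t q)⁻¹ * u)
          = ∏ q : L ⧸ (P : Subgroup L),
            Λ (((t ((u : L) • ((v : L) • q)))⁻¹ * u * t ((v : L) • q))⁻¹ * u) :=
          (Equiv.prod_comp (MulAction.toPerm (v : L)) (fun q : L ⧸ (P : Subgroup L) =>
            Λ (((t ((u : L) • q))⁻¹ * u * t q)⁻¹ * u))).symm
        rw [e1, ← Finset.prod_mul_distrib]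
        refine Finset.prod_congr rfl fun q _ => ?_
        set a := ((t ((u : L) • ((v : L) • q)))⁻¹ * u * t ((v : L) • q)) with ha
        set b := ((t ((v : L) • q))⁻¹ * v * t q) with hb
        have hab : ((t (((u * v : P) : L) • q))⁻¹ * ((u * v : P) : L) * t q) = a * b := by
          rw [ha, hb]; push_cast; rw [mul_smul]; group
        have haP : a ∈ P := hmem u _
        have hbP : b ∈ P := hmem v _
        have haK : a⁻¹ * u ∈ K := hmemK u _
        have hbK : b⁻¹ * v ∈ K := hmemK v _
        have haP' : a⁻¹ * u ∈ P := mul_mem (inv_mem haP) u.2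
        rw [hab, ← hinv b⁻¹ (a⁻¹ * u) (inv_mem hbP) haP' haK, ← hmul]
        · congr 1; push_cast; group
        · exact mul_mem (mul_mem (inv_mem hbP) haP') (inv_mem (inv_mem hbP))
        · exact hK.conj_mem _ haK _
        · exact mul_mem (inv_mem hbP) v.2
        · exact hbK }
  have hmemK' : ∀ (k : L) (q : L ⧸ (P : Subgroup L)), k ∈ K → ((t (k • q))⁻¹ * k * t q) ∈ K :=
    fun k q hk => mul_mem (mul_mem (inv_mem (htK _)) hk) (htK _)
  let τ : K →* Multiplicative (ZMod p) :=
    { toFun := fun k => ∏ q : L ⧸ (P : Subgroup L), Λ ((t ((k : L) • q))⁻¹ * k * t q)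
      map_one' := by
        refine Finset.prod_eq_one fun q _ => ?_
        simp [hΛ1]
      map_mul' := by
        intro u v
        have e1 : ∏ q : L ⧸ (P : Subgroup L), Λ ((t ((u : L) • q))⁻¹ * u * t q)
          = ∏ q : L ⧸ (P : Subgroup L),
            Λ ((t ((u : L) • ((v : L) • q)))⁻¹ * u * t ((v : L) • q)) :=
          (Equiv.prod_comp (MulAction.toPerm (v : L)) (fun q : L ⧸ (P : Subgroup L) =>
            Λ ((t ((u : L) • q))⁻¹ * u * t q))).symm
        rw [e1, ← Finset.prod_mul_distrib]
        refine Finset.prod_congr rfl fun q _ => ?_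
        rw [← hmul _ _ (hmem _ _) (hmemK' _ _ u.2) (hmem _ _) (hmemK' _ _ v.2)]
        congr 1
        push_cast; rw [mul_smul]; group }
  have hτ : ∀ k : K, τ k = 1 := by
    have : K ≤ τ.ker.map K.subtype := by
      refine (Subgroup.closure_le _).2 fun x hx => ?_
      have hxK : x ∈ K := Subgroup.subset_closure hx
      refine ⟨⟨x, hxK⟩, ?_, rfl⟩
      refine MonoidHom.mem_ker.2 (hom_kill τ ?_)
      simpa using hx
    intro k
    obtain ⟨k', hk', e⟩ := this k.2
    rw [← Subtype.ext (a1 := k') e]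
    exact hk'
  have hhd : h ⟨x0, hx0P⟩ = Λ x0 ^ (P : Subgroup L).index := by
    have h1 : h ⟨x0, hx0P⟩ = ∏ q : L ⧸ (P : Subgroup L),
        ((Λ ((t (x0 • q))⁻¹ * x0 * t q))⁻¹ * Λ x0) := by
      refine Finset.prod_congr rfl fun q _ => ?_
      rw [hmul _ _ (inv_mem (hmem _ _)) (inv_mem (hmemK' _ _ hx0K)) hx0P hx0K,
        hΛinv _ (hmem _ _) (hmemK' _ _ hx0K)]
    have h2 : ∏ q : L ⧸ (P : Subgroup L), Λ ((t (x0 • q))⁻¹ * x0 * t q) = 1 := hτ ⟨x0, hx0K⟩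
    rw [h1, Finset.prod_mul_distrib, Finset.prod_inv_distrib, h2, Finset.prod_const,
      inv_one, one_mul, Finset.card_univ, Subgroup.index_eq_card, Nat.card_eq_fintype_card]
  obtain ⟨φ, hφ⟩ := hext h
  have hφK : K ≤ φ.ker := (Subgroup.closure_le _).2 fun x hx => hom_kill φ hx
  have h1 : φ x0 = 1 := hφK hx0K
  have h2 := hφ ⟨x0, hx0P⟩
  rw [h1, hhd] at h2
  exact pow_ne_one_of_coprime P.not_dvd_index _ hx0 h2.symm

theorem ext_of_stable {L : Type*} [Group L] [Finite L] {p : ℕ} [hp : Fact p.Prime] (P : Sylow p L)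
    (hst : ∀ f : P →* Multiplicative (ZMod p), f ≠ 1 → ∃ x : P, f x ≠ 1 ∧
      ∀ (g : L) (k : ℕ) (h : g⁻¹ * (x : L) ^ k * g ∈ P), f ⟨_, h⟩ = f x ^ k) :
    ∀ f : P →* Multiplicative (ZMod p), ∃ φ : L →* Multiplicative (ZMod p),
      ∀ x : P, φ x = f x := by
  classical
  let Φ : (P →* Multiplicative (ZMod p)) → (P →* Multiplicative (ZMod p)) :=
    fun f => (MonoidHom.transfer (H := (P : Subgroup L)) f).comp (P : Subgroup L).subtype
  have htr : ∀ (f : P →* Multiplicative (ZMod p)) (g : L), MonoidHom.transfer (H := (P : Subgroup L)) f g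
     = Subgroup.leftTransversals.diff (H := (P : Subgroup L)) f default (g • default) := fun f g => rfl
  have hmul : ∀ f g, Φ (f * g) = Φ f * Φ g := by
    intro f g
    ext x : 1
    change MonoidHom.transfer (H := (P : Subgroup L)) (f * g) x
      = MonoidHom.transfer (H := (P : Subgroup L)) f x * MonoidHom.transfer (H := (P : Subgroup L)) g x
    rw [htr, htr, htr]
    unfold Subgroup.leftTransversals.diff
    rw [← Finset.prod_mul_distrib]
    rfl
  let Ψ : (P →* Multiplicative (ZMod p)) →* (P →* Multiplicative (ZMod p)) := MonoidHom.mk' Φ hmul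
  have hinj : Function.Injective Ψ := by
    rw [injective_iff_map_eq_one]
    intro f hf
    by_contra hne
    obtain ⟨x, hx, hstab⟩ := hst f hne
    have h1 : MonoidHom.transfer (H := (P : Subgroup L)) f (x : L) = 1 := by
      have := DFunLike.congr_fun hf x
      exact this
    letI := Fintype.ofFinite (Quotient (MulAction.orbitRel (Subgroup.zpowers (x : L)) (L ⧸ (P : Subgroup L))))
    rw [MonoidHom.transfer_eq_prod_quotient_orbitRel_zpowers_quot] at h1
    letI := Fintype.ofFinite (L ⧸ (P : Subgroup L))
    rw [Finset.prod_congr rfl (fun q _ => hstab _ _ _), Finset.prod_pow_eq_pow_sum,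
      ← Subgroup.index_eq_sum_minimalPeriod] at h1
    exact pow_ne_one_of_coprime P.not_dvd_index _ hx h1
  haveI : Finite (P →* Multiplicative (ZMod p)) := DFunLike.finite _
  have hsurj := Finite.surjective_of_injective hinj
  intro f
  obtain ⟨f', rfl⟩ := hsurj f
  exact ⟨MonoidHom.transfer (H := (P : Subgroup L)) f', fun x => rfl⟩

lemma relIndex_sup_normal' {X : Type*} [Group X] [Finite X] (P B : Subgroup X) [hB : B.Normal] :
    P.relIndex (P ⊔ B) = P.relIndex B := by
  have h1 : (P ⊓ B).relIndex B * B.relIndex (P ⊔ B) = (P ⊓ B).relIndex (P ⊔ B) :=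
    Subgroup.relIndex_mul_relIndex _ _ _ inf_le_right le_sup_right
  have h2 : (P ⊓ B).relIndex P * P.relIndex (P ⊔ B) = (P ⊓ B).relIndex (P ⊔ B) :=
    Subgroup.relIndex_mul_relIndex _ _ _ inf_le_left le_sup_left
  rw [Subgroup.inf_relIndex_right, Subgroup.relIndex_sup_right] at h1
  rw [Subgroup.inf_relIndex_left, ← h1, mul_comm] at h2
  exact Nat.eq_of_mul_eq_mul_right (Nat.pos_of_ne_zero (Subgroup.index_ne_zero_of_finite)) h2

/-- every q-element normalizing D centralizes D -/
def CentCond {X : Type*} [Group X] (p : ℕ) (D : Subgroup X) : Prop :=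
  ∀ q : ℕ, q.Prime → q ≠ p → ∀ g : X, (∃ k, orderOf g = q ^ k) →
    (∀ d ∈ D, g * d * g⁻¹ ∈ D) → ∀ d ∈ D, g * d * g⁻¹ = d

lemma norm_decomp {X : Type*} [Group X] [Finite X] {p : ℕ} (D : Subgroup X) (hD : CentCond p D)
    (S : Sylow p (Subgroup.normalizer (D : Set X))) (h : Subgroup.normalizer (D : Set X)) :
    ∃ z s : Subgroup.normalizer (D : Set X), (∀ d ∈ D, (z : X) * d * (z : X)⁻¹ = d) ∧ s ∈ S ∧ h = z * s := by
  let N := Subgroup.normalizer (D : Set X)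
  let C : Subgroup N := (Subgroup.centralizer (D : Set X)).subgroupOf N
  haveI : C.Normal := Subgroup.normal_subgroupOf_centralizer_normalizer _
  have hC : ∀ z : N, z ∈ C ↔ ∀ d ∈ D, (z : X) * d * (z : X)⁻¹ = d := by
    intro z
    rw [Subgroup.mem_subgroupOf, Subgroup.mem_centralizer_iff]
    refine forall₂_congr fun d _ => ?_
    rw [mul_inv_eq_iff_eq_mul]
    exact eq_comm
  have htop : C ⊔ S = ⊤ := by
    refine top_of_sylow_p p S _ le_sup_right fun q hq hqp x hx => ?_
    refine (le_sup_left : C ≤ _) ((hC x).2 ?_)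
    refine hD q hq hqp x ?_ fun d hd => (Subgroup.mem_normalizer_iff.1 x.2 d).1 hd
    obtain ⟨k, hk⟩ := hx
    exact ⟨k, by simpa using hk⟩
  have : h ∈ C ⊔ S := by rw [htop]; trivial
  obtain ⟨z, hz, s, hs, e⟩ := Subgroup.mem_sup_of_normal_left.1 this
  exact ⟨z, s, (hC z).1 hz, hs, e.symm⟩

lemma lt_norm_inf {X : Type*} [Group X] [Finite X] {p : ℕ} [Fact p.Prime] (R D : Subgroup X)
    (hR : IsPGroup p R) (hlt : D < R) : D < R ⊓ Subgroup.normalizer (D : Set X) := by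
  haveI := hR.isNilpotent
  have hnc := Group.normalizerCondition_of_isNilpotent (G := R)
  have h1 : D.subgroupOf R < ⊤ := by
    rw [lt_top_iff_ne_top]
    intro h
    exact hlt.not_ge (Subgroup.subgroupOf_eq_top.1 h)
  obtain ⟨x, hx, hx'⟩ := SetLike.exists_of_lt (hnc _ h1)
  refine lt_of_le_of_ne (le_inf hlt.le Subgroup.le_normalizer) fun h => ?_
  apply hx'
  rw [Subgroup.mem_subgroupOf, h]
  refine ⟨x.2, Subgroup.mem_normalizer_iff.2 fun d => ?_⟩
  have hx2 := Subgroup.mem_normalizer_iff.1 hx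
  constructor
  · intro hd
    have := (hx2 ⟨d, hlt.le hd⟩).1 (Subgroup.mem_subgroupOf.2 hd)
    simpa [Subgroup.mem_subgroupOf] using this
  · intro hd
    have hdR : d ∈ R := by
      have := mul_mem (mul_mem (inv_mem x.2) (hlt.le hd)) x.2
      simpa [mul_assoc] using this
    exact Subgroup.mem_subgroupOf.1 ((hx2 ⟨d, hdR⟩).2 (Subgroup.mem_subgroupOf.2 (by simpa using hd)))

lemma mem_smul_sylow {X : Type*} [Group X] {p : ℕ} (P : Sylow p X) (g x : X) :
    x ∈ g • P ↔ g⁻¹ * x * g ∈ P := by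
  change x ∈ ((g • P : Sylow p X) : Subgroup X) ↔ _
  rw [Sylow.coe_subgroup_smul, Subgroup.mem_pointwise_smul_iff_inv_smul_mem]
  simp [← map_inv, MulAut.smul_def]
  rfl

lemma F1 {X : Type*} [Group X] [Finite X] {p : ℕ} [hp : Fact p.Prime]
    (hcent : ∀ D : Subgroup X, IsPGroup p D → CentCond p D) :
    ∀ (m : ℕ) (R1 R2 : Sylow p X), Nat.card X - Nat.card ((R1 : Subgroup X) ⊓ R2 : Subgroup X) < m →
      ∃ c : X, (∀ d, d ∈ R1 → d ∈ R2 → c * d * c⁻¹ = d) ∧ c • R1 = R2 := by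
  intro m
  induction m with
  | zero => intro _ _ h; omega
  | succ m ih =>
    intro R1 R2 hm
    by_cases hR : R1 = R2
    · exact ⟨1, by simp, by simp [hR]⟩
    set D : Subgroup X := (R1 : Subgroup X) ⊓ R2 with hDdef
    have hD1 : D < R1 := by
      refine lt_of_le_of_ne inf_le_left fun h => hR ?_
      exact Sylow.ext ((R1.3 R2.2 (inf_eq_left.1 h)).symm)
    have hD2 : D < R2 := by
      refine lt_of_le_of_ne inf_le_right fun h => hR ?_
      exact Sylow.ext (R2.3 R1.2 (inf_eq_right.1 h))
    have hDp : IsPGroup p D := R1.2.to_le inf_le_left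
    let N := Subgroup.normalizer (D : Set X)
    have hl1 : D < (R1 : Subgroup X) ⊓ N := lt_norm_inf _ _ R1.2 hD1
    have hl2 : D < (R2 : Subgroup X) ⊓ N := lt_norm_inf _ _ R2.2 hD2
    have hex : ∀ R : Sylow p X, ∃ S : Sylow p N, ∀ x (hx : x ∈ N), x ∈ R → (⟨x, hx⟩ : N) ∈ S := by
      intro R
      have : IsPGroup p ((R : Subgroup X).subgroupOf N) := R.2.comap_subtype
      obtain ⟨S, hS⟩ := this.exists_le_sylow
      exact ⟨S, fun x hx hxR => hS (Subgroup.mem_subgroupOf.2 hxR)⟩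
    obtain ⟨S1, hS1⟩ := hex R1
    obtain ⟨S2, hS2⟩ := hex R2
    obtain ⟨g, hg⟩ := MulAction.exists_smul_eq N S1 S2
    obtain ⟨c, s, hc, hs, rfl⟩ := norm_decomp D (hcent D hDp) S1 g
    have hsS : s • S1 = S1 := Sylow.smul_eq_iff_mem_normalizer.2 (Subgroup.le_normalizer hs)
    rw [mul_smul, hsS] at hg
    have hS1p : IsPGroup p ((S1 : Subgroup N).map N.subtype) := S1.2.map _
    obtain ⟨R, hRS⟩ := hS1p.exists_le_sylow
    have hlt1 : D < (R1 : Subgroup X) ⊓ R := by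
      refine lt_of_lt_of_le hl1 fun x hx => ⟨hx.1, hRS ?_⟩
      exact ⟨⟨x, hx.2⟩, hS1 x hx.2 hx.1, rfl⟩
    have hlt2 : D < ((((c : X) • R : Sylow p X)) : Subgroup X) ⊓ R2 := by
      refine lt_of_lt_of_le hl2 fun x hx => ⟨?_, hx.1⟩
      change x ∈ (c : X) • R
      rw [mem_smul_sylow]
      have h3 := hS2 x hx.2 hx.1
      rw [← hg, mem_smul_sylow] at h3
      exact hRS ⟨_, h3, rfl⟩
    have hcard : ∀ D' : Subgroup X, D < D' → Nat.card X - Nat.card D' < m := by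
      intro D' h
      have h1 : Nat.card D < Nat.card D' := Set.Finite.card_lt_card (Set.toFinite _) h
      have h2 : Nat.card D' ≤ Nat.card X := Subgroup.card_le_card_group D'
      omega
    obtain ⟨c1, h1, e1⟩ := ih R1 R (hcard _ hlt1)
    obtain ⟨c2, h2, e2⟩ := ih ((c : X) • R) R2 (hcard _ hlt2)
    refine ⟨c2 * c * c1, fun d hd1 hd2 => ?_, by rw [mul_smul, mul_smul, e1, e2]⟩
    have hd : d ∈ D := ⟨hd1, hd2⟩
    have a1 := h1 d (hlt1.le hd).1 (hlt1.le hd).2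
    have a2 := h2 d (hlt2.le hd).1 (hlt2.le hd).2
    have a3 := hc d hd
    calc c2 * c * c1 * d * (c2 * c * c1)⁻¹ = c2 * (c * (c1 * d * c1⁻¹) * (c : X)⁻¹) * c2⁻¹ := by group
      _ = d := by rw [a1, a3, a2]

lemma F2 {X : Type*} [Group X] [Finite X] {p : ℕ} [hp : Fact p.Prime] (P : Sylow p X)
    (B : Subgroup X) [hB : B.Normal]
    (hcent : ∀ D : Subgroup X, D ≤ B → IsPGroup p D → CentCond p D)
    (x g : X) (hxP : x ∈ P) (hxB : x ∈ B) (hg : g⁻¹ * x * g ∈ P) :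
    ∃ u ∈ P, g⁻¹ * x * g = u⁻¹ * x * u := by
  have hcB : ∀ D : Subgroup B, IsPGroup p D → CentCond p D := by
    intro D hD q hq hqp g hg hgD d hd
    have := hcent (D.map B.subtype) (by rintro _ ⟨y, _, rfl⟩; exact y.2) (hD.map _) q hq hqp g
      (by obtain ⟨k, hk⟩ := hg; exact ⟨k, by simpa using hk⟩)
      (by rintro _ ⟨y, hy, rfl⟩; exact ⟨_, hgD y hy, rfl⟩) d ⟨d, hd, rfl⟩
    exact Subtype.ext this
  have hpB : IsPGroup p ((P : Subgroup X).subgroupOf B) := P.2.comap_subtype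
  have hnd : ¬ p ∣ ((P : Subgroup X).subgroupOf B).index := by
    intro h
    change p ∣ (P : Subgroup X).relIndex B at h
    rw [← relIndex_sup_normal'] at h
    exact P.not_dvd_index (h.trans (Subgroup.relIndex_dvd_index_of_le le_sup_left))
  let R : Sylow p B := hpB.toSylow hnd
  have hR : ∀ y : B, y ∈ R ↔ (y : X) ∈ P := by
    intro y
    change y ∈ (R : Subgroup B) ↔ _
    rw [IsPGroup.toSylow_coe, Subgroup.mem_subgroupOf]; rfl
  let R2 : Sylow p B := (MulAut.conjNormal g : MulAut B) • R
  have hR2 : ∀ y : B, y ∈ R2 ↔ g⁻¹ * (y : X) * g ∈ P := by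
    intro y
    change y ∈ ((MulAut.conjNormal g : MulAut B) • (R : Subgroup B)) ↔ _
    rw [Subgroup.mem_pointwise_smul_iff_inv_smul_mem, ← map_inv, MulAut.smul_def]
    change _ ∈ R ↔ _
    rw [hR, MulAut.conjNormal_apply, inv_inv]
  obtain ⟨c, hc, e⟩ := F1 hcB _ R R2 (Nat.lt_succ_self _)
  have hcx : (c : X) * x * (c : X)⁻¹ = x := by
    have := hc ⟨x, hxB⟩ ((hR _).2 hxP) ((hR2 _).2 hg)
    exact congrArg Subtype.val this
  let D : Subgroup X := (P : Subgroup X) ⊓ B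
  let N := Subgroup.normalizer (D : Set X)
  have hPN : (P : Subgroup X) ≤ N := by
    intro u hu
    refine Subgroup.mem_normalizer_iff.2 fun d => ?_
    have h1 : u * d * u⁻¹ ∈ (P : Subgroup X) ↔ d ∈ (P : Subgroup X) := by
      rw [Subgroup.mul_mem_cancel_right _ (inv_mem hu), Subgroup.mul_mem_cancel_left _ hu]
    have h2 : u * d * u⁻¹ ∈ B ↔ d ∈ B := (hB.mem_comm_iff).trans (by simp)
    change (d ∈ (P : Subgroup X) ∧ d ∈ B) ↔ (_ ∈ (P : Subgroup X) ∧ _ ∈ B)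
    rw [h1, h2]
  have hhN : (c : X)⁻¹ * g ∈ N := by
    refine Subgroup.mem_normalizer_iff.2 fun d => ?_
    have h2 : (c : X)⁻¹ * g * d * ((c : X)⁻¹ * g)⁻¹ ∈ B ↔ d ∈ B := (hB.mem_comm_iff).trans (by simp [mul_assoc])
    change (d ∈ P ∧ d ∈ B) ↔ (_ ∈ P ∧ _ ∈ B)
    rw [h2]
    refine and_congr_left fun hd => ?_
    -- y = g d g⁻¹
    have hy : g * d * g⁻¹ ∈ B := hB.conj_mem d hd g
    have h3 := hR2 ⟨_, hy⟩
    rw [← e, mem_smul_sylow, hR] at h3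
    have e1 : g⁻¹ * (g * d * g⁻¹) * g = d := by group
    have e2 : (c : X)⁻¹ * g * d * ((c : X)⁻¹ * g)⁻¹ = (c : X)⁻¹ * (g * d * g⁻¹) * c := by group
    rw [e2]
    simp only [e1] at h3
    exact h3.symm
  obtain ⟨z, s, hz, hs, es⟩ := norm_decomp D (hcent D inf_le_right (P.2.to_le inf_le_left))
    (P.subtype hPN) ⟨_, hhN⟩
  have es' : (c : X)⁻¹ * g = z * s := congrArg Subtype.val es
  have hsP : (s : X) ∈ P := hs
  refine ⟨s, hsP, ?_⟩
  have hzx := hz x ⟨hxP, hxB⟩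
  have hg' : g = c * z * s := by rw [mul_assoc, ← es']; group
  have hcx' : (c : X)⁻¹ * x * c = x := by
    conv_lhs => rw [← hcx]
    group
  have hzx' : (z : X)⁻¹ * x * z = x := by
    conv_lhs => rw [← hzx]
    group
  calc g⁻¹ * x * g = (s : X)⁻¹ * ((z : X)⁻¹ * ((c : X)⁻¹ * x * c) * z) * s := by rw [hg']; group
    _ = _ := by rw [hcx', hzx']

theorem propU {L : Type*} [Group L] [Finite L] {p : ℕ} [hp : Fact p.Prime] (P : Sylow p L)
    (A : Subgroup L) [hA : A.Normal] (B : Subgroup (L ⧸ A)) [hB : B.Normal]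
    (hcent : ∀ D : Subgroup (L ⧸ A), D ≤ B → IsPGroup p D → CentCond p D)
    (f : P →* Multiplicative (ZMod p)) (hf : ∀ x : P, (x : L) ∈ A → f x = 1)
    (x : P) (hx : (QuotientGroup.mk (x : L) : L ⧸ A) ∈ B) :
    ∀ (g : L) (k : ℕ) (h : g⁻¹ * (x : L) ^ k * g ∈ P), f ⟨_, h⟩ = f x ^ k := by
  intro g k h
  let Q : Sylow p (L ⧸ A) := P.mapSurjective (QuotientGroup.mk'_surjective A)
  have hQ : ∀ y ∈ P, (QuotientGroup.mk y : L ⧸ A) ∈ Q := fun y hy => by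
    change _ ∈ (Q : Subgroup (L ⧸ A))
    rw [Sylow.coe_mapSurjective]
    exact ⟨y, hy, rfl⟩
  obtain ⟨u', hu', e⟩ := F2 Q B hcent (QuotientGroup.mk ((x : L) ^ k)) (QuotientGroup.mk g)
    (hQ _ (pow_mem x.2 k)) (by rw [QuotientGroup.mk_pow]; exact pow_mem hx k)
    (hQ _ h)
  have : u' ∈ (Q : Subgroup (L ⧸ A)) := hu'
  rw [Sylow.coe_mapSurjective] at this
  obtain ⟨u, hu, rfl⟩ := this
  let U : P := ⟨u, hu⟩
  have h1 : ((⟨_, h⟩ : P) * (U⁻¹ * x ^ k * U)⁻¹ : P).1 ∈ A := by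
    rw [← QuotientGroup.eq_one_iff]
    change (QuotientGroup.mk ((g⁻¹ * (x : L) ^ k * g) * (u⁻¹ * (x : L) ^ k * u)⁻¹) : L ⧸ A) = 1
    rw [QuotientGroup.mk_mul, QuotientGroup.mk_inv, mul_inv_eq_one]
    exact e
  have h2 := hf _ h1
  rw [map_mul, map_inv, mul_inv_eq_one] at h2
  rw [h2, map_mul, map_mul, map_inv, map_pow, mul_comm, mul_inv_cancel_left]

lemma mem_sup_of_perm {G : Type*} [Group G] (H K : Subgroup G)
    (h : (H : Set G) * (K : Set G) = (K : Set G) * (H : Set G)) {x : G} (hx : x ∈ H ⊔ K) :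
    ∃ a ∈ H, ∃ b ∈ K, a * b = x := by
  let J : Subgroup G :=
    { carrier := (H : Set G) * (K : Set G)
      one_mem' := ⟨1, one_mem H, 1, one_mem K, by simp⟩
      mul_mem' := by
        rintro _ _ ⟨a, ha, b, hb, rfl⟩ ⟨c, hc, d, hd, rfl⟩
        have : b * c ∈ (H : Set G) * (K : Set G) := by rw [h]; exact ⟨b, hb, c, hc, rfl⟩
        obtain ⟨c', hc', b', hb', e⟩ := this
        refine ⟨a * c', mul_mem ha hc', b' * d, mul_mem hb' hd, ?_⟩
        have e' : c' * b' = b * c := e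
        calc a * c' * (b' * d) = a * (c' * b') * d := by group
          _ = a * b * (c * d) := by rw [e']; group
      inv_mem' := by
        rintro _ ⟨a, ha, b, hb, rfl⟩
        change (a * b)⁻¹ ∈ (H : Set G) * (K : Set G)
        rw [h]
        exact ⟨b⁻¹, inv_mem hb, a⁻¹, inv_mem ha, by simp⟩ }
  have hJ : H ⊔ K ≤ J := sup_le (fun a ha => ⟨a, ha, 1, one_mem K, by simp⟩)
    (fun b hb => ⟨1, one_mem H, b, hb, by simp⟩)
  obtain ⟨a, ha, b, hb, e⟩ := hJ hx
  exact ⟨a, ha, b, hb, e⟩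

lemma sylowIn_top {G : Type*} [Group G] [Finite G] {q : ℕ} [hq : Fact q.Prime] (Q : Sylow q G) :
    IsSylowIn q (Q : Subgroup G) ⊤ := by
  refine ⟨le_top, Q.2, ?_⟩
  change ¬ q ∣ (Q : Subgroup G).relIndex ⊤
  rw [Subgroup.relIndex_top_right]
  exact Q.not_dvd_index

lemma sperm_norm {G : Type*} [Group G] [Finite G] {p : ℕ} [hp : Fact p.Prime] (H T : Subgroup G)
    [hT : T.Normal] (hH : IsPGroup p H) (hs : SPermutable (H ⊔ T)) (q : ℕ) (hq : q.Prime)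
    (hqp : q ≠ p) (g : G) (hg : ∃ k, orderOf g = q ^ k) : ∀ a ∈ H ⊔ T, g * a * g⁻¹ ∈ H ⊔ T := by
  haveI := Fact.mk hq
  have h1 : ∀ R : Sylow p G, H ≤ T ⊔ R := by
    intro R
    let J := (H ⊔ T) ⊔ (R : Subgroup G)
    have hRJ : (R : Subgroup G) ≤ J := le_sup_right
    have hHJ : IsPGroup p (H.subgroupOf J) := hH.comap_subtype
    obtain ⟨S, hS⟩ := hHJ.exists_le_sylow
    obtain ⟨j, hj⟩ := MulAction.exists_smul_eq J (R.subtype hRJ) S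
    obtain ⟨a, ha, b, hb, e⟩ := mem_sup_of_perm _ _ (hs p hp.out R (sylowIn_top R)) j.2
    obtain ⟨h, hh, t, ht, rfl⟩ := Subgroup.mem_sup_of_normal_right.1 ha
    intro x hx
    have hx1 : h * x * h⁻¹ ∈ H := mul_mem (mul_mem hh hx) (inv_mem hh)
    have hx2 : (⟨h * x * h⁻¹, (le_sup_left.trans le_sup_left : H ≤ J) hx1⟩ : J) ∈ S :=
      hS (Subgroup.mem_subgroupOf.2 hx1)
    rw [← hj, mem_smul_sylow] at hx2
    have hx3 : (j : G)⁻¹ * (h * x * h⁻¹) * (j : G) ∈ R := hx2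
    rw [← e] at hx3
    have htT : t ∈ T ⊔ (R : Subgroup G) := (le_sup_left : T ≤ _) ht
    have hbR : b ∈ T ⊔ (R : Subgroup G) := (le_sup_right : (R : Subgroup G) ≤ _) hb
    have hx4 : _ ∈ T ⊔ (R : Subgroup G) := (le_sup_right : (R : Subgroup G) ≤ _) hx3
    have := mul_mem (mul_mem (mul_mem htT hbR) hx4) (inv_mem (mul_mem htT hbR))
    convert this using 1
    group
  let P0 : Sylow p G := default
  let O := (T ⊔ (P0 : Subgroup G)).normalCore
  have hAO : H ⊔ T ≤ O := by
    intro a ha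
    change ∀ b : G, b * a * b⁻¹ ∈ T ⊔ (P0 : Subgroup G)
    intro b
    have h2 : a ∈ T ⊔ ((b⁻¹ • P0 : Sylow p G) : Subgroup G) := (sup_le (h1 _) le_sup_left) ha
    obtain ⟨t, ht, c, hc, rfl⟩ := Subgroup.mem_sup_of_normal_left.1 h2
    have hc' : b * c * b⁻¹ ∈ P0 := by
      have : c ∈ b⁻¹ • P0 := hc
      rw [mem_smul_sylow, inv_inv] at this
      exact this
    have e : b * (t * c) * b⁻¹ = (b * t * b⁻¹) * (b * c * b⁻¹) := by group
    rw [e]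
    exact mul_mem ((le_sup_left : T ≤ _) (hT.conj_mem t ht b))
      ((le_sup_right : (P0 : Subgroup G) ≤ _) hc')
  have hgp : IsPGroup q (Subgroup.zpowers g) := by
    obtain ⟨k, hk⟩ := hg
    exact IsPGroup.of_card (n := k) (by rw [Nat.card_zpowers, hk])
  obtain ⟨Q, hQ⟩ := hgp.exists_le_sylow
  have hgQ : g ∈ (Q : Subgroup G) := hQ (Subgroup.mem_zpowers g)
  have hQO : ∀ x ∈ (Q : Subgroup G), x ∈ O → x ∈ T := by
    intro x hx hxO
    have h2 : x ∈ T ⊔ (P0 : Subgroup G) := Subgroup.normalCore_le _ hxO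
    obtain ⟨t, ht, c, hc, rfl⟩ := Subgroup.mem_sup_of_normal_left.1 h2
    obtain ⟨k, hk⟩ := (IsPGroup.iff_orderOf.1 Q.2) ⟨_, hx⟩
    obtain ⟨l, hl⟩ := (IsPGroup.iff_orderOf.1 P0.2) ⟨_, hc⟩
    rw [Subgroup.orderOf_mk] at hk hl
    have e : (QuotientGroup.mk (t * c) : G ⧸ T) = QuotientGroup.mk c := by
      rw [QuotientGroup.mk_mul, (QuotientGroup.eq_one_iff t).2 ht, one_mul]
    have o1 : orderOf (QuotientGroup.mk (t * c) : G ⧸ T) ∣ q ^ k := by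
      rw [← hk]; exact orderOf_map_dvd (QuotientGroup.mk' T) (t * c)
    have o2 : orderOf (QuotientGroup.mk (t * c) : G ⧸ T) ∣ p ^ l := by
      rw [← hl, e]; exact orderOf_map_dvd (QuotientGroup.mk' T) c
    have := Nat.eq_one_of_dvd_coprimes
      (Nat.Coprime.pow k l ((Nat.coprime_primes hq hp.out).2 hqp)) o1 o2
    rw [orderOf_eq_one_iff, QuotientGroup.eq_one_iff] at this
    exact this
  intro a ha
  have hga : g * a ∈ ((H ⊔ T : Subgroup G) : Set G) * ((Q : Subgroup G) : Set G) := by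
    rw [hs q hq Q (sylowIn_top Q)]
    exact ⟨g, hgQ, a, ha, rfl⟩
  obtain ⟨a', ha', y, hy, e⟩ := hga
  have e' : a' * y = g * a := e
  have e2 : g * a * g⁻¹ = a' * (y * g⁻¹) := by rw [← e', mul_assoc]
  have h3 : y * g⁻¹ ∈ O := by
    have h4 : g * a * g⁻¹ ∈ O := (Subgroup.normalCore_normal _).conj_mem a (hAO ha) g
    rw [e2] at h4
    exact (Subgroup.mul_mem_cancel_left _ (hAO ha')).1 h4
  rw [e2]
  exact mul_mem ha' ((le_sup_right : T ≤ _) (hQO _ (mul_mem hy (inv_mem hgQ)) h3))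

/-- normal chains with factors of order one or prime -/
inductive ChainGood {X : Type*} [Group X] : Subgroup X → Prop
  | bot : ChainGood ⊥
  | step (M N : Subgroup X) : ChainGood M → N.Normal → M ≤ N →
      (∃ r : ℕ, r.Prime ∧ M.relIndex N ∣ r) → ChainGood N

lemma ChainGood.normal {X : Type*} [Group X] {M : Subgroup X} (h : ChainGood M) : M.Normal := by
  cases h with
  | bot => infer_instance
  | step M _ _ h _ _ => exact h

lemma chainGood_of_good {X : Type*} [Group X] [Finite X] : ∀ (m : ℕ) (N : Subgroup X),
    Nat.card N < m → N.Normal → (∀ A B : Subgroup X, IsChiefFactor A B → A ≤ N → (B.relIndex A).Prime) →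
    ChainGood N := by
  intro m
  induction m with
  | zero => intro N h; omega
  | succ m ih =>
    intro N hm hN hch
    by_cases hb : N = ⊥
    · rw [hb]; exact ChainGood.bot
    obtain ⟨B, -, hB⟩ := Finite.exists_le_maximal
      (p := fun B : Subgroup X => B.Normal ∧ B < N) (a := ⊥) ⟨inferInstance, bot_lt_iff_ne_bot.2 hb⟩
    have hcf : IsChiefFactor N B := by
      refine ⟨hN, hB.1.1, hB.1.2, fun L hL h1 h2 => ?_⟩
      exact h1.not_ge (hB.2 ⟨hL, h2⟩ h1.le)
    refine ChainGood.step B N (ih B ?_ hB.1.1 fun A C hAC hA => hch A C hAC (hA.trans hB.1.2.le))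
      hN hB.1.2.le ⟨_, hch N B hcf le_rfl, dvd_rfl⟩
    have : Nat.card B < Nat.card N := Set.Finite.card_lt_card (Set.toFinite _) hB.1.2
    omega

lemma ChainGood.sup {X : Type*} [Group X] {M N : Subgroup X} (hM : ChainGood M) (hN : ChainGood N) :
    ChainGood (M ⊔ N) := by
  induction hN with
  | bot => simpa using hM
  | step N1 N2 h1 h2 h12 hr ih =>
    obtain ⟨r, hr, hd⟩ := hr
    haveI := hM.normal
    haveI := h1.normal
    refine ChainGood.step (M ⊔ N1) _ ih (Subgroup.sup_normal M N2) (sup_le_sup_left h12 _) ⟨r, hr, ?_⟩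
    have e : M ⊔ N2 = (M ⊔ N1) ⊔ N2 := by rw [sup_assoc, sup_eq_right.2 h12]
    haveI : (M ⊔ N1).Normal := Subgroup.sup_normal M N1
    rw [e, Subgroup.relIndex_sup_left]
    exact (Subgroup.relIndex_dvd_of_le_left N2 le_sup_right).trans hd

lemma exists_chainGood {X : Type*} [Group X] [Finite X] :
    ∃ M : Subgroup X, ChainGood M ∧ UHypercenter X ≤ M := by
  obtain ⟨M, -, hM⟩ := Finite.exists_le_maximal (p := fun B : Subgroup X => ChainGood B)
    (a := ⊥) ChainGood.bot
  refine ⟨M, hM.1, sSup_le fun N hN => ?_⟩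
  have h := chainGood_of_good _ N (Nat.lt_succ_self _) hN.1 hN.2
  exact le_sup_right.trans (hM.2 (hM.1.sup h) le_sup_left)

lemma cent_chain {X : Type*} [Group X] [Finite X] {p n q : ℕ} (hp : p.Prime) (hn : 1 ≤ n) (hq : q.Prime)
    (hqp : q ≠ p) (hqn : ∀ i, 1 ≤ i → i ≤ n → ¬ q ∣ p ^ i - 1)
    (D M : Subgroup X) (hM : ChainGood M) (hD : IsPGroup p D) (g : X) (hg : ∃ k, orderOf g = q ^ k)
    (hgD : ∀ d ∈ D, g * d * g⁻¹ ∈ D) : ∀ d ∈ D ⊓ M, g * d * g⁻¹ = d := by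
  haveI := Fact.mk hp
  induction hM with
  | bot =>
    rintro d ⟨-, hd⟩
    have hd := Subgroup.mem_bot.1 hd
    simp [hd]
  | step N1 N2 h1 h2 h12 hr ih =>
    obtain ⟨r, hr, hd⟩ := hr
    haveI := h1.normal
    have hDN : IsPGroup p (D ⊓ N2 : Subgroup X) := hD.to_le inf_le_left
    refine cent_of_count hp hq hqp hqn (D ⊓ N2) (D ⊓ N1) hDN g hg
      (fun d hd => ⟨hgD d hd.1, h2.conj_mem d hd.2 g⟩) (inf_le_inf_left _ h12) ih ?_
    have e : (D ⊓ N1).relIndex (D ⊓ N2) = N1.relIndex (D ⊓ N2) := by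
      rw [← Subgroup.inf_relIndex_right (H := N1)]
      congr 1
      ext x
      simp only [Subgroup.mem_inf]
      exact ⟨fun h => ⟨h.2, h.1, h12 h.2⟩, fun h => ⟨h.2.1, h.1⟩⟩
    rw [e]
    have hd1 : N1.relIndex (D ⊓ N2) ∣ N1.relIndex N2 := by
      have := Subgroup.relIndex_dvd_index_of_normal (H := N1.subgroupOf N2) (K := (D ⊓ N2).subgroupOf N2)
      rwa [Subgroup.relIndex_subgroupOf inf_le_right] at this
    have hd2 : N1.relIndex (D ⊓ N2) ∣ Nat.card (D ⊓ N2 : Subgroup X) := Subgroup.relIndex_dvd_card _ _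
    obtain ⟨k, hk⟩ := hDN.exists_card_eq
    rw [hk] at hd2
    rcases (Nat.dvd_prime hr).1 (hd1.trans hd) with h | h
    · rw [h]; exact one_dvd _
    · rw [h] at hd2 ⊢
      have := (Nat.prime_dvd_prime_iff_eq hr hp).1 (hr.dvd_of_dvd_pow hd2)
      rw [this]
      exact dvd_pow_self _ (by omega)

lemma maximalIn_of_prime {G : Type*} [Group G] [Finite G] {M N : Subgroup G} (h : M ≤ N)
    (hp : (M.relIndex N).Prime) : IsMaximalIn M N := by
  refine ⟨lt_of_le_of_ne h ?_, fun L h1 h2 => ?_⟩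
  · rintro rfl
    rw [Subgroup.relIndex_self] at hp
    exact Nat.not_prime_one hp
  · have e := Subgroup.relIndex_mul_relIndex M L N h1.le h2
    rcases (Nat.dvd_prime hp).1 (Dvd.intro _ e) with h3 | h3
    · exact absurd (Subgroup.relIndex_eq_one.1 h3) h1.not_ge
    · rw [h3] at e
      have : L.relIndex N = 1 := by
        have := hp.pos
        exact Nat.eq_of_mul_eq_mul_left this (by rw [e, mul_one])
      exact le_antisymm h2 (Subgroup.relIndex_eq_one.1 this)

lemma nmax_cons {G : Type*} [Group G] {m : ℕ} {H N P : Subgroup G} (h : IsMaximalIn N P)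
    (hH : IsNMaximalIn m H N) : IsNMaximalIn (m + 1) H P := by
  obtain ⟨c, h0, h1, h2⟩ := hH
  refine ⟨Fin.cons P c, rfl, ?_, fun i => ?_⟩
  · rw [← Fin.succ_last, Fin.cons_succ, h1]
  · induction i using Fin.cases with
    | zero =>
      rw [Fin.castSucc_zero, Fin.cons_zero, Fin.cons_succ, h0]
      exact h
    | succ i =>
      rw [Fin.cons_succ, ← Fin.succ_castSucc, Fin.cons_succ]
      exact h2 i

lemma nmax_chain {G : Type*} [Group G] [Finite G] {p : ℕ} [hp : Fact p.Prime] (P : Subgroup G)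
    (hP : IsPGroup p P) : ∀ (m : ℕ) (N : Subgroup P), N.Normal → p ^ m ∣ Nat.card N →
      ∃ H : Subgroup P, H ≤ N ∧ H.Normal ∧ H.relIndex N = p ^ m ∧
        IsNMaximalIn m (H.map P.subtype) (N.map P.subtype) := by
  intro m
  induction m with
  | zero =>
    intro N hN _
    exact ⟨N, le_rfl, hN, by simp, fun _ => N.map P.subtype, rfl, rfl, fun i => i.elim0⟩
  | succ m ih =>
    intro N hN hd
    have hne : N ≠ ⊥ := by
      rintro rfl
      rw [Subgroup.card_bot, Nat.dvd_one] at hd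
      exact hp.out.one_lt.ne' ((Nat.pow_eq_one.1 hd).resolve_right (by omega))
    obtain ⟨M, hM, hMN, hi, -⟩ := pgroup_step hP N hne
    have hc : Nat.card M * p = Nat.card N := by
      have := Subgroup.relIndex_mul_relIndex ⊥ M N bot_le hMN
      rwa [Subgroup.relIndex_bot_left, Subgroup.relIndex_bot_left, hi] at this
    have hd' : p ^ m ∣ Nat.card M := by
      rw [← hc, pow_succ] at hd
      exact Nat.dvd_of_mul_dvd_mul_right hp.out.pos hd
    obtain ⟨H, h1, h2, h3, h4⟩ := ih M hM hd'
    refine ⟨H, h1.trans hMN, h2, ?_, nmax_cons (maximalIn_of_prime (Subgroup.map_mono hMN) ?_) h4⟩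
    · rw [← Subgroup.relIndex_mul_relIndex H M N h1 hMN, h3, hi, pow_succ]
    · rw [Subgroup.relIndex_map_map_of_injective _ _ P.subtype_injective, hi]
      exact hp.out

/-- arithmetic condition -/
def ArithCond (p n m : ℕ) : Prop :=
  ∀ q : ℕ, q.Prime → q ∣ m → ∀ i, 1 ≤ i → i ≤ n → ¬ q ∣ p ^ i - 1

lemma CC {X : Type*} [Group X] [Finite X] {p n : ℕ} (hp : p.Prime) (hn : 1 ≤ n)
    (hX : ArithCond p n (Nat.card X)) (D M : Subgroup X) (hM : ChainGood M) (hD : IsPGroup p D)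
    (hi : M.relIndex D ∣ p ^ n) : CentCond p D := by
  intro q hq hqp g hg hgD
  by_cases h1 : g = 1
  · intro d _; simp [h1]
  have hqX : q ∣ Nat.card X := by
    obtain ⟨k, hk⟩ := hg
    have hk0 : k ≠ 0 := by
      rintro rfl
      rw [pow_zero, orderOf_eq_one_iff] at hk
      exact h1 hk
    exact (dvd_pow_self q hk0).trans (hk ▸ orderOf_dvd_natCard g)
  refine cent_of_count hp hq hqp (hX q hq hqX) D (D ⊓ M) hD g hg hgD inf_le_left
    (cent_chain hp hn hq hqp (hX q hq hqX) D M hM hD g hg hgD) ?_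
  rwa [Subgroup.inf_relIndex_left]

lemma centCond_of_map {X Y : Type*} [Group X] [Group Y] {p : ℕ} (φ : X →* Y)
    (hφ : Function.Injective φ) (D : Subgroup X) (h : CentCond p (D.map φ)) : CentCond p D := by
  intro q hq hqp g hg hgD d hd
  apply hφ
  rw [map_mul, map_mul, map_inv]
  refine h q hq hqp (φ g) (by rw [orderOf_injective φ hφ]; exact hg) ?_ _ ⟨d, hd, rfl⟩
  rintro _ ⟨y, hy, rfl⟩
  exact ⟨_, hgD y hy, by simp⟩

lemma card_dvd_of_sylow_map {K Y : Type*} [Group K] [Group Y] [Finite K] [Finite Y] {p : ℕ}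
    [hp : Fact p.Prime] (φ : K →* Y) (R : Sylow p K) (D : Subgroup Y) (hD : D ≤ φ.range)
    (hDp : IsPGroup p D) : Nat.card D ∣ φ.ker.relIndex (R : Subgroup K) := by
  have hs : Function.Surjective φ.rangeRestrict := φ.rangeRestrict_surjective
  let Q := R.mapSurjective hs
  have h1 : Nat.card Q = φ.ker.relIndex (R : Subgroup K) := by
    have := Subgroup.relIndex_ker (K := (R : Subgroup K)) (f := φ.rangeRestrict)
    rw [MonoidHom.ker_rangeRestrict] at this
    rw [this]
    have e := Sylow.coe_mapSurjective hs R
    change Nat.card (Q : Subgroup φ.range) = _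
    rw [e]
  have h2 : Nat.card (D.subgroupOf φ.range) = Nat.card D :=
    Nat.card_congr (Subgroup.subgroupOfEquivOfLe hD).toEquiv
  have hDp' : IsPGroup p (D.subgroupOf φ.range) := hDp.comap_subtype
  obtain ⟨k, hk⟩ := hDp'.exists_card_eq
  rw [← h1, ← h2, hk]
  refine Q.pow_dvd_card_of_pow_dvd_card ?_
  rw [← hk]
  exact Subgroup.card_subgroup_dvd_card _

lemma relIndex_of_mul {G : Type*} [Group G] (K T J : Subgroup G) (hTJ : T ≤ J)
    (h : ∀ j ∈ J, ∃ t ∈ T, ∃ k ∈ K, j = t * k) : K.relIndex T = K.relIndex J := by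
  unfold Subgroup.relIndex
  rw [Subgroup.index_eq_card, Subgroup.index_eq_card]
  refine Nat.card_congr (Equiv.ofBijective (Subgroup.quotientSubgroupOfEmbeddingOfLE K hTJ)
    ⟨(Subgroup.quotientSubgroupOfEmbeddingOfLE K hTJ).injective, fun q => ?_⟩)
  induction q using QuotientGroup.induction_on with
  | H j =>
    obtain ⟨t, ht, k, hk, e⟩ := h j j.2
    refine ⟨QuotientGroup.mk ⟨t, ht⟩, ?_⟩
    rw [Subgroup.quotientSubgroupOfEmbeddingOfLE_apply_mk, QuotientGroup.eq, Subgroup.mem_subgroupOf]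
    change t⁻¹ * (j : G) ∈ K
    rw [e]; simpa using hk

lemma supp_stable {G : Type*} [Group G] [Finite G] {p : ℕ} [hp : Fact p.Prime]
    (L P H : Subgroup G) (hPL : P ≤ L) (hP : IsPGroup p P) (hPi : ¬ p ∣ P.relIndex L) (hHP : H ≤ P)
    (hsup : HasPNilpotentSupplement p H) (f : P →* Multiplicative (ZMod p)) (hf : f ≠ 1)
    (hfH : ∀ x : P, (x : G) ∈ H → f x = 1) :
    ∃ x : P, f x ≠ 1 ∧ ∀ g ∈ L, ∀ (k : ℕ) (h : g⁻¹ * (x : G) ^ k * g ∈ P), f ⟨_, h⟩ = f x ^ k := by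
  obtain ⟨T, ⟨N, hN, hNc, j, hNi⟩, hHT⟩ := hsup
  have hdec : ∀ x : G, ∃ h ∈ H, ∃ t ∈ T, x = h * t := by
    intro x
    have : x ∈ (H : Set G) * (T : Set G) := by rw [hHT]; trivial
    obtain ⟨h, hh, t, ht, e⟩ := this
    exact ⟨h, hh, t, ht, e.symm⟩
  let T0 := T ⊓ L
  have hLT : ∀ l ∈ L, ∃ t ∈ T0, ∃ u ∈ H, l = t * u := by
    intro l hl
    obtain ⟨h, hh, t, ht, e⟩ := hdec l⁻¹
    have htL : t ∈ L := by
      have : t = h⁻¹ * l⁻¹ := by rw [e]; group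
      rw [this]
      exact mul_mem (inv_mem (hPL (hHP hh))) (inv_mem hl)
    refine ⟨t⁻¹, inv_mem ⟨ht, htL⟩, h⁻¹, inv_mem hh, ?_⟩
    rw [← mul_inv_rev, ← e, inv_inv]
  have hPT : ¬ p ∣ (P.subgroupOf T0).index := by
    change ¬ p ∣ P.relIndex T0
    rw [relIndex_of_mul P T0 L inf_le_right fun l hl => ?_]
    · exact hPi
    · obtain ⟨t, ht, u, hu, e⟩ := hLT l hl
      exact ⟨t, ht, u, hHP hu, e⟩
  have hpT : IsPGroup p (P.subgroupOf T0) := hP.comap_subtype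
  let S : Sylow p T0 := hpT.toSylow hPT
  have hS : (S : Subgroup T0) = P.subgroupOf T0 := IsPGroup.toSylow_coe _ _
  have hT0T : T0 ≤ T := inf_le_left
  let N0 : Subgroup T0 := N.comap (Subgroup.inclusion hT0T)
  haveI : N0.Normal := hN.comap _
  have htop : N0 ⊔ (S : Subgroup T0) = ⊤ := by
    refine top_of_sylow_p p S _ le_sup_right fun q hq hqp x hx => ?_
    refine (le_sup_left : N0 ≤ _) ?_
    obtain ⟨k, hk⟩ := hx
    change Subgroup.inclusion hT0T x ∈ N
    rw [← QuotientGroup.eq_one_iff, ← orderOf_eq_one_iff]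
    have o1 : orderOf (QuotientGroup.mk (Subgroup.inclusion hT0T x) : T ⧸ N) ∣ q ^ k := by
      rw [← hk]
      exact orderOf_map_dvd ((QuotientGroup.mk' N).comp (Subgroup.inclusion hT0T)) x
    have o2 : orderOf (QuotientGroup.mk (Subgroup.inclusion hT0T x) : T ⧸ N) ∣ p ^ j := by
      rw [← hNi, Subgroup.index_eq_card]
      exact orderOf_dvd_natCard _
    exact Nat.eq_one_of_dvd_coprimes
      (Nat.Coprime.pow k j ((Nat.coprime_primes hq hp.out).2 hqp)) o1 o2
  have hNP : ∀ x : T0, x ∈ N0 → (x : G) ∈ P → x = 1 := by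
    intro x hx hxP
    obtain ⟨k, hk⟩ := (IsPGroup.iff_orderOf.1 hP) ⟨_, hxP⟩
    rw [Subgroup.orderOf_mk] at hk
    have o1 : orderOf (x : G) ∣ Nat.card N := by
      have := orderOf_dvd_natCard (⟨Subgroup.inclusion hT0T x, Subgroup.mem_comap.1 hx⟩ : N)
      rw [Subgroup.orderOf_mk] at this
      rw [← Subgroup.orderOf_coe] at this
      exact this
    have := Nat.eq_one_of_dvd_coprimes (hNc.pow_right k) o1 (dvd_of_eq hk)
    rw [orderOf_eq_one_iff] at this
    exact Subtype.ext this
  obtain ⟨x0, hx0⟩ : ∃ x : P, f x ≠ 1 := by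
    by_contra hno
    push Not at hno
    exact hf (MonoidHom.ext hno)
  obtain ⟨h0, hh0, s, hsT, e0⟩ := hdec x0
  have hsP : s ∈ P := by
    have : s = h0⁻¹ * x0 := by rw [e0]; group
    rw [this]
    exact mul_mem (inv_mem (hHP hh0)) x0.2
  have hfs : f ⟨s, hsP⟩ ≠ 1 := by
    have : x0 = (⟨h0, hHP hh0⟩ : P) * ⟨s, hsP⟩ := Subtype.ext e0
    rw [this, map_mul, hfH ⟨h0, hHP hh0⟩ hh0, one_mul] at hx0
    exact hx0
  refine ⟨⟨s, hsP⟩, hfs, fun g hg k h => ?_⟩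
  obtain ⟨t, ht, u, hu, rfl⟩ := hLT g hg
  have hsT0 : s ∈ T0 := ⟨hsT, hPL hsP⟩
  have htm : (⟨t, ht⟩ : T0) ∈ N0 ⊔ (S : Subgroup T0) := by rw [htop]; trivial
  obtain ⟨m, hm, v, hv, e⟩ := Subgroup.mem_sup_of_normal_left.1 htm
  rw [hS, Subgroup.mem_subgroupOf] at hv
  have e' : (m : G) * v = t := congrArg Subtype.val e
  let U : P := ⟨u, hHP hu⟩
  let V : P := ⟨v, hv⟩
  let s' : T0 := ⟨s, hsT0⟩
  have hkey : v⁻¹ * (m⁻¹ * (s' ^ k * m * (s' ^ k)⁻¹)) * v = 1 := by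
    apply hNP
    · have h1 : m⁻¹ * (s' ^ k * m * (s' ^ k)⁻¹) ∈ N0 :=
        mul_mem (inv_mem hm) (Subgroup.Normal.conj_mem inferInstance m hm _)
      have := Subgroup.Normal.conj_mem (inferInstance : N0.Normal) _ h1 v⁻¹
      simpa using this
    · have h2 := mul_mem (mul_mem (mul_mem (hHP hu) h) (inv_mem (hHP hu)))
        (mul_mem (mul_mem (inv_mem hv) (inv_mem (pow_mem hsP k))) hv)
      convert h2 using 1
      simp only [s', ← e']
      push_cast
      group
  have hkey' : (v : G)⁻¹ * ((m : G)⁻¹ * (s ^ k * m * (s ^ k)⁻¹)) * v = 1 := congrArg Subtype.val hkey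
  have hfin : (⟨_, h⟩ : P) = U⁻¹ * (V⁻¹ * (⟨s, hsP⟩ : P) ^ k * V) * U := by
    apply Subtype.ext
    change (t * u)⁻¹ * s ^ k * (t * u) = u⁻¹ * ((v : G)⁻¹ * s ^ k * v) * u
    have : (m : G)⁻¹ * s ^ k * m = s ^ k := by
      have h3 : (m : G)⁻¹ * (s ^ k * m * (s ^ k)⁻¹) = 1 := by
        have := congrArg (fun z => (v : G) * z * (v : G)⁻¹) hkey'
        simpa [mul_assoc] using this
      have h4 := congrArg (fun z => z * s ^ k) h3
      simpa [mul_assoc] using h4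
    calc (t * u)⁻¹ * s ^ k * (t * u) = u⁻¹ * ((v : G)⁻¹ * ((m : G)⁻¹ * s ^ k * m) * v) * u := by
          rw [← e']; group
      _ = _ := by rw [this]
  rw [hfin]
  simp only [map_mul, map_inv, map_pow]
  rw [mul_comm, mul_inv_cancel_left, mul_comm, mul_inv_cancel_left]

lemma propU' {G : Type*} [Group G] [Finite G] {p : ℕ} [hp : Fact p.Prime]
    (L P : Subgroup G) (hPL : P ≤ L) (PL : Sylow p L) (hPm : ∀ x : L, x ∈ PL ↔ (x : G) ∈ P)
    (A : Subgroup L) [hA : A.Normal] (B : Subgroup (L ⧸ A)) [hB : B.Normal]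
    (hcent : ∀ D : Subgroup (L ⧸ A), D ≤ B → IsPGroup p D → CentCond p D)
    (f : P →* Multiplicative (ZMod p)) (hf : ∀ x : P, (⟨x, hPL x.2⟩ : L) ∈ A → f x = 1)
    (x : P) (hx : (QuotientGroup.mk (⟨x, hPL x.2⟩ : L) : L ⧸ A) ∈ B) :
    ∀ g ∈ L, ∀ (k : ℕ) (h : g⁻¹ * (x : G) ^ k * g ∈ P), f ⟨_, h⟩ = f x ^ k := by
  intro g hg k h
  let e : PL →* P :=
    { toFun := fun y => ⟨y, (hPm y).1 y.2⟩
      map_one' := rfl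
      map_mul' := fun _ _ => rfl }
  have h' : (⟨g, hg⟩ : L)⁻¹ * (⟨x, hPL x.2⟩ : L) ^ k * ⟨g, hg⟩ ∈ PL := (hPm _).2 h
  have := propU PL A B hcent (f.comp e) (fun y hy => hf (e y) hy)
    ⟨⟨x, hPL x.2⟩, (hPm _).2 x.2⟩ hx ⟨g, hg⟩ k h'
  exact this

lemma ArithCond.mono {p n m m' : ℕ} (h : ArithCond p n m) (hd : m' ∣ m) : ArithCond p n m' :=
  fun q hq hqm => h q hq (hqm.trans hd)

lemma quot_small {L : Type*} [Group L] [Finite L] {p n : ℕ} [hp : Fact p.Prime] (hn : 1 ≤ n)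
    (hL : ArithCond p n (Nat.card L)) (PL : Sylow p L) (A : Subgroup L) [hA : A.Normal]
    (hi : A.relIndex (PL : Subgroup L) ∣ p ^ n) (D : Subgroup (L ⧸ A)) (hD : IsPGroup p D) :
    CentCond p D := by
  refine CC hp.out hn (hL.mono (Subgroup.card_quotient_dvd_card A)) D ⊥ ChainGood.bot hD ?_
  rw [Subgroup.relIndex_bot_left]
  have := card_dvd_of_sylow_map (QuotientGroup.mk' A) PL D
    (fun x _ => (QuotientGroup.mk'_surjective A) x) hD
  rw [QuotientGroup.ker_mk'] at this
  exact this.trans hi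

lemma relIndex_dvd_mid {G : Type*} [Group G] (H P K : Subgroup G) (hKP : K ≤ P)
    (hHn : (H.subgroupOf P).Normal) : H.relIndex K ∣ H.relIndex P := by
  have := Subgroup.relIndex_dvd_index_of_normal (H := H.subgroupOf P) (K := K.subgroupOf P)
  rwa [Subgroup.relIndex_subgroupOf hKP] at this

lemma usqn_stable {G : Type*} [Group G] [Finite G] {p n : ℕ} [hp : Fact p.Prime] (hn : 1 ≤ n)
    (hG : ArithCond p n (Nat.card G))
    (L P H : Subgroup G) [hLn : L.Normal] (hPL : P ≤ L) (hP : IsPGroup p P) (hPi : ¬ p ∣ P.relIndex L)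
    (PL : Sylow p L) (hPm : (PL : Subgroup L) = P.subgroupOf L) (hHP : H ≤ P)
    (hHn : (H.subgroupOf P).Normal) (hHi : H.relIndex P = p ^ n)
    (hus : UsQuasinormal H) (f : P →* Multiplicative (ZMod p)) (hf : f ≠ 1)
    (hfH : ∀ x : P, (x : G) ∈ H → f x = 1) :
    ∃ x : P, f x ≠ 1 ∧ ∀ g ∈ L, ∀ (k : ℕ) (h : g⁻¹ * (x : G) ^ k * g ∈ P), f ⟨_, h⟩ = f x ^ k := by
  have hPm' : ∀ x : L, x ∈ PL ↔ (x : G) ∈ P := by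
    intro x
    change x ∈ (PL : Subgroup L) ↔ _
    rw [hPm, Subgroup.mem_subgroupOf]
  have hGL : ArithCond p n (Nat.card L) := hG.mono (Subgroup.card_subgroup_dvd_card L)
  have hHp : IsPGroup p H := hP.to_le hHP
  obtain ⟨T, hT, hs, hz⟩ := hus
  by_cases hcase : ∃ x : P, (x : G) ∈ T ∧ f x ≠ 1
  · obtain ⟨x, hxT, hfx⟩ := hcase
    refine ⟨x, hfx, ?_⟩
    let C := H.normalCore
    have hCH : C ≤ H := Subgroup.normalCore_le H
    haveI hCn : C.Normal := Subgroup.normalCore_normal H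
    let CL : Subgroup L := C.subgroupOf L
    haveI hCLn : CL.Normal := inferInstance
    obtain ⟨M, hM, hUM⟩ := exists_chainGood (X := G ⧸ C)
    haveI hMn : M.Normal := hM.normal
    let ι : L ⧸ CL →* G ⧸ C := QuotientGroup.map CL C L.subtype (fun y hy => hy)
    have hι : Function.Injective ι := by
      rw [injective_iff_map_eq_one]
      intro y hy
      induction y using QuotientGroup.induction_on with
      | H y =>
        change (QuotientGroup.mk (y : G) : G ⧸ C) = 1 at hy
        rw [QuotientGroup.eq_one_iff] at hy ⊢
        exact hy
    let TL : Subgroup L := T.subgroupOf L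
    haveI : TL.Normal := inferInstance
    let B : Subgroup (L ⧸ CL) := TL.map (QuotientGroup.mk' CL)
    haveI : B.Normal := Subgroup.Normal.map inferInstance _ (QuotientGroup.mk'_surjective CL)
    let K : Subgroup G := T ⊓ L
    haveI hKn : K.Normal := Subgroup.normal_inf_normal T L
    have hKp : IsPGroup p (P.subgroupOf K) := hP.comap_subtype
    have hKi : ¬ p ∣ (P.subgroupOf K).index := by
      intro h
      change p ∣ P.relIndex K at h
      rw [← relIndex_sup_normal'] at h
      refine hPi (h.trans ?_)
      have := Subgroup.relIndex_mul_relIndex P (P ⊔ K) L le_sup_left (sup_le hPL inf_le_right)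
      exact Dvd.intro _ this
    let R : Sylow p K := hKp.toSylow hKi
    have hR : (R : Subgroup K) = P.subgroupOf K := IsPGroup.toSylow_coe _ _
    let φ : K →* (G ⧸ C) ⧸ M := ((QuotientGroup.mk' M).comp (QuotientGroup.mk' C)).comp K.subtype
    refine propU' L P hPL PL hPm' CL B ?_ f (fun y hy => hfH y (hCH hy)) x ?_
    · intro D hDB hD
      refine centCond_of_map ι hι D ?_
      have hDp : IsPGroup p (D.map ι) := hD.map ι
      refine CC hp.out hn (hG.mono (Subgroup.card_quotient_dvd_card C)) _ M hM hDp ?_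
      have h1 : M.relIndex (D.map ι) = Nat.card ((D.map ι).map (QuotientGroup.mk' M)) := by
        rw [← Subgroup.relIndex_ker, QuotientGroup.ker_mk']
      rw [h1]
      refine (card_dvd_of_sylow_map φ R _ ?_ (hDp.map _)).trans ?_
      · rintro _ ⟨_, ⟨d, hd, rfl⟩, rfl⟩
        obtain ⟨t, ht, rfl⟩ := hDB hd
        exact ⟨⟨t, ht, t.2⟩, rfl⟩
      · have h2 : H.subgroupOf K ≤ φ.ker := by
          intro y hy
          rw [MonoidHom.mem_ker]
          change (QuotientGroup.mk (QuotientGroup.mk (y : G) : G ⧸ C) : (G ⧸ C) ⧸ M) = 1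
          rw [QuotientGroup.eq_one_iff]
          exact hUM (hz y ⟨hy, y.2.1⟩)
        refine (Subgroup.relIndex_dvd_of_le_left _ h2).trans ?_
        rw [hR, ← Subgroup.inf_subgroupOf_right P K, Subgroup.relIndex_subgroupOf inf_le_right, ← hHi]
        exact relIndex_dvd_mid H P _ inf_le_left hHn
    · exact ⟨⟨x, hPL x.2⟩, hxT, rfl⟩
  · push Not at hcase
    obtain ⟨x, hx⟩ : ∃ x : P, f x ≠ 1 := by
      by_contra hno
      push Not at hno
      exact hf (MonoidHom.ext hno)
    refine ⟨x, hx, ?_⟩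
    let A := H ⊔ T
    let AL : Subgroup L := A.subgroupOf L
    have hno : L ≤ Subgroup.normalizer (A : Set G) := by
      have : (Subgroup.normalizer (A : Set G)).subgroupOf L = ⊤ := by
        have hmem : ∀ g : G, (∀ a ∈ A, g * a * g⁻¹ ∈ A) → (∀ a ∈ A, g⁻¹ * a * g⁻¹⁻¹ ∈ A) →
            g ∈ Subgroup.normalizer (A : Set G) := by
          intro g h1 h2
          refine Subgroup.mem_normalizer_iff.2 fun a => ⟨h1 a, fun h => ?_⟩
          have := h2 _ h
          simpa [mul_assoc] using this
        refine top_of_sylow_p p PL _ ?_ fun q hq hqp g hg => ?_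
        · intro u hu
          rw [hPm, Subgroup.mem_subgroupOf] at hu
          rw [Subgroup.mem_subgroupOf]
          have key : ∀ v ∈ P, ∀ a ∈ A, v * a * v⁻¹ ∈ A := by
            intro v hv a ha
            obtain ⟨h, hh, t, ht, rfl⟩ := Subgroup.mem_sup_of_normal_right.1 ha
            have e : v * (h * t) * v⁻¹ = (v * h * v⁻¹) * (v * t * v⁻¹) := by group
            rw [e]
            refine mul_mem ((le_sup_left : H ≤ A) ?_) ((le_sup_right : T ≤ A) (hT.conj_mem t ht v))
            exact hHn.conj_mem ⟨h, hHP hh⟩ hh ⟨v, hv⟩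
          exact hmem _ (key u hu) (key _ (inv_mem hu))
        · rw [Subgroup.mem_subgroupOf]
          obtain ⟨k, hk⟩ := hg
          refine hmem _ (sperm_norm H T hHp hs q hq hqp g ⟨k, by simpa using hk⟩)
            (sperm_norm H T hHp hs q hq hqp (g : G)⁻¹ ⟨k, by simpa using hk⟩)
      exact Subgroup.subgroupOf_eq_top.1 this
    haveI hALn : AL.Normal := by
      refine ⟨fun a ha g => ?_⟩
      exact (Subgroup.mem_normalizer_iff.1 (hno g.2) a).1 ha
    have hi : AL.relIndex (PL : Subgroup L) ∣ p ^ n := by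
      rw [hPm, Subgroup.relIndex_subgroupOf hPL, ← hHi]
      exact Subgroup.relIndex_dvd_of_le_left P le_sup_left
    refine propU' L P hPL PL hPm' AL ⊤ (fun D _ hD => quot_small hn hGL PL AL hi D hD) f ?_ x trivial
    intro y hy
    have hyA : (y : G) ∈ A := hy
    obtain ⟨h, hh, t, ht, e⟩ := Subgroup.mem_sup_of_normal_right.1 hyA
    have htP : t ∈ P := by
      have : t = h⁻¹ * y := by rw [← e]; group
      rw [this]
      exact mul_mem (inv_mem (hHP hh)) y.2
    have : y = (⟨h, hHP hh⟩ : P) * ⟨t, htP⟩ := Subtype.ext e.symm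
    rw [this, map_mul, hfH _ hh, hcase _ ht, one_mul]

theorem stable_main {G : Type*} [Group G] [Finite G] {p n : ℕ} [hp : Fact p.Prime] (hn : 1 ≤ n)
    (hG : ArithCond p n (Nat.card G))
    (L P : Subgroup G) [hLn : L.Normal] (hPL : P ≤ L) (hP : IsPGroup p P) (hPi : ¬ p ∣ P.relIndex L)
    (PL : Sylow p L) (hPm : (PL : Subgroup L) = P.subgroupOf L)
    (hmax : ∀ H : Subgroup G, IsNMaximalIn n H P → HasPNilpotentSupplement p H ∨ UsQuasinormal H)
    (f : P →* Multiplicative (ZMod p)) (hf : f ≠ 1) :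
    ∃ x : P, f x ≠ 1 ∧ ∀ g ∈ L, ∀ (k : ℕ) (h : g⁻¹ * (x : G) ^ k * g ∈ P), f ⟨_, h⟩ = f x ^ k := by
  have hPm' : ∀ x : L, x ∈ PL ↔ (x : G) ∈ P := by
    intro x
    change x ∈ (PL : Subgroup L) ↔ _
    rw [hPm, Subgroup.mem_subgroupOf]
  have hGL : ArithCond p n (Nat.card L) := hG.mono (Subgroup.card_subgroup_dvd_card L)
  obtain ⟨a, ha⟩ := hP.exists_card_eq
  by_cases hle : n ≤ a
  · have hki : f.ker.index = p := by
      rw [Subgroup.index_ker]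
      have h1 : Nat.card f.range ∣ p := by
        have := Subgroup.card_subgroup_dvd_card f.range
        simpa [Nat.card_zmod] using this
      refine ((Nat.dvd_prime hp.out).1 h1).resolve_left fun h => hf ?_
      have := Subgroup.card_eq_one.1 h
      exact MonoidHom.range_eq_bot_iff.1 this
    have hkc : p ^ (n - 1) ∣ Nat.card f.ker := by
      have h1 := Subgroup.card_mul_index f.ker
      rw [hki, ha] at h1
      have h2 : p ^ (n - 1) * p ∣ Nat.card f.ker * p := by
        rw [h1, ← pow_succ]
        exact pow_dvd_pow p (by omega)
      exact Nat.dvd_of_mul_dvd_mul_right hp.out.pos h2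
    obtain ⟨H0, h1, h2, h3, h4⟩ := nmax_chain P hP (n - 1) f.ker inferInstance hkc
    let H := H0.map P.subtype
    have hHP : H ≤ P := by rintro _ ⟨y, _, rfl⟩; exact y.2
    have hH0 : H.subgroupOf P = H0 := by
      ext y
      rw [Subgroup.mem_subgroupOf]
      constructor
      · rintro ⟨z, hz, e⟩
        rw [← Subtype.ext (a1 := z) e]; exact hz
      · intro h; exact ⟨y, h, rfl⟩
    have hHi : H.relIndex P = p ^ n := by
      change (H.subgroupOf P).index = _
      rw [hH0, ← Subgroup.relIndex_mul_index h1, h3, hki, ← pow_succ]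
      congr 1; omega
    have hN : IsNMaximalIn n H P := by
      have hm : IsMaximalIn (f.ker.map P.subtype) P := by
        have e : (⊤ : Subgroup P).map P.subtype = P := by
          rw [← MonoidHom.range_eq_map, Subgroup.range_subtype]
        have := maximalIn_of_prime (M := f.ker.map P.subtype) (N := (⊤ : Subgroup P).map P.subtype)
          (Subgroup.map_mono le_top) (by
            rw [Subgroup.relIndex_map_map_of_injective _ _ P.subtype_injective,
              Subgroup.relIndex_top_right, hki]
            exact hp.out)
        rwa [e] at this
      have := nmax_cons hm h4
      rwa [Nat.sub_add_cancel hn] at this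
    have hfH : ∀ x : P, (x : G) ∈ H → f x = 1 := by
      intro x hx
      have : x ∈ H0 := by rw [← hH0]; exact hx
      exact h1 this
    rcases hmax H hN with hs | hs
    · exact supp_stable L P H hPL hP hPi hHP hs f hf hfH
    · exact usqn_stable hn hG L P H hPL hP hPi PL hPm hHP (hH0 ▸ h2) hHi hs f hf hfH
  · obtain ⟨x, hx⟩ : ∃ x : P, f x ≠ 1 := by
      by_contra hno
      push Not at hno
      exact hf (MonoidHom.ext hno)
    refine ⟨x, hx, ?_⟩
    have hi : (⊥ : Subgroup L).relIndex (PL : Subgroup L) ∣ p ^ n := by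
      rw [Subgroup.relIndex_bot_left, hPm, Nat.card_congr (Subgroup.subgroupOfEquivOfLe hPL).toEquiv, ha]
      exact pow_dvd_pow p (by omega)
    refine propU' L P hPL PL hPm' ⊥ ⊤ (fun D _ hD => quot_small hn hGL PL ⊥ hi D hD) f ?_ x trivial
    intro y hy
    have h1 : (⟨y, hPL y.2⟩ : L) = 1 := Subgroup.mem_bot.1 hy
    have h2 : (y : G) = 1 := congrArg (fun z : L => (z : G)) h1
    have : y = 1 := Subtype.ext h2
    rw [this, map_one]

lemma pnil_forward {G : Type*} [Group G] [Finite G] (p n : ℕ) (hp : p.Prime) (hn : 1 ≤ n)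
    (h : IsPNilpotent p G) :
      ∃ E : Subgroup G, ∃ _ : E.Normal, IsPNilpotent p (G ⧸ E) ∧
        ∃ P : Subgroup G, IsSylowIn p P E ∧
          ∀ H : Subgroup G, IsNMaximalIn n H P →
            HasPNilpotentSupplement p H ∨ UsQuasinormal H := by
  obtain ⟨N, hN, hc, k, hk⟩ := h
  refine ⟨N, hN, ⟨⊥, inferInstance, by simp, k, ?_⟩, ⊥, ⟨bot_le, IsPGroup.of_bot, ?_⟩, ?_⟩
  · rw [Subgroup.index_bot, ← Subgroup.index_eq_card, hk]
  · rw [Subgroup.bot_subgroupOf, Subgroup.index_bot]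
    exact (Nat.Prime.coprime_iff_not_dvd hp).1 hc.symm
  · rintro H ⟨c, h0, -, h2⟩
    exfalso
    have := (h2 ⟨0, hn⟩).1
    have e : c (Fin.castSucc ⟨0, hn⟩) = ⊥ := h0
    rw [e] at this
    exact not_lt_bot this

lemma pnil_backward {G : Type*} [Group G] [Finite G] (p n : ℕ) (hp : p.Prime) (hn : 1 ≤ n)
    (hcop : Nat.Coprime (Nat.card G) (∏ i ∈ Finset.Icc 1 n, (p ^ i - 1)))
    (E : Subgroup G) [hE : E.Normal] (hQ : IsPNilpotent p (G ⧸ E)) (P : Subgroup G)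
    (hPE : IsSylowIn p P E)
    (hmax : ∀ H : Subgroup G, IsNMaximalIn n H P → HasPNilpotentSupplement p H ∨ UsQuasinormal H) :
    IsPNilpotent p G := by
  haveI := Fact.mk hp
  have hG : ArithCond p n (Nat.card G) := by
    intro q hq hqG i h1 h2 hd
    have : q ∣ ∏ i ∈ Finset.Icc 1 n, (p ^ i - 1) :=
      hd.trans (Finset.dvd_prod_of_mem _ (Finset.mem_Icc.2 ⟨h1, h2⟩))
    exact hq.one_lt.ne' (Nat.eq_one_of_dvd_coprimes hcop hqG this)
  obtain ⟨N, hN, hNc, k, hk⟩ := hQ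
  obtain ⟨hPE1, hP, hPi⟩ := hPE
  let L : Subgroup G := N.comap (QuotientGroup.mk' E)
  haveI hLn : L.Normal := hN.comap _
  have hEL : E ≤ L := by
    intro x hx
    change (QuotientGroup.mk x : G ⧸ E) ∈ N
    rw [(QuotientGroup.eq_one_iff x).2 hx]
    exact one_mem N
  have hLi : L.index = p ^ k := by
    rw [← hk]
    exact Subgroup.index_comap_of_surjective N (QuotientGroup.mk'_surjective E)
  have hEi : E.relIndex L = Nat.card N := by
    have h1 := Subgroup.relIndex_ker (K := L) (QuotientGroup.mk' E)
    rw [QuotientGroup.ker_mk'] at h1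
    rw [h1, Subgroup.map_comap_eq_self_of_surjective (QuotientGroup.mk'_surjective E)]
  have hPL : P ≤ L := hPE1.trans hEL
  have hPLi : ¬ p ∣ P.relIndex L := by
    rw [← Subgroup.relIndex_mul_relIndex P E L hPE1 hEL, hEi]
    intro h
    rcases hp.dvd_mul.1 h with h | h
    · exact hPi h
    · exact (Nat.Prime.coprime_iff_not_dvd hp).1 hNc.symm h
  have hpL : IsPGroup p (P.subgroupOf L) := hP.comap_subtype
  let PL : Sylow p L := hpL.toSylow hPLi
  have hPm : (PL : Subgroup L) = P.subgroupOf L := IsPGroup.toSylow_coe _ _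
  have hPm' : ∀ x : L, x ∈ PL ↔ (x : G) ∈ P := by
    intro x
    change x ∈ (PL : Subgroup L) ↔ _
    rw [hPm, Subgroup.mem_subgroupOf]
  have hcopL : (Nat.card (OpP p L)).Coprime p := by
    refine tate PL (ext_of_stable PL fun f hf => ?_)
    let e : P →* PL :=
      { toFun := fun y => ⟨⟨y, hPL y.2⟩, (hPm' _).2 y.2⟩
        map_one' := rfl
        map_mul' := fun _ _ => rfl }
    have hne : f.comp e ≠ 1 := by
      intro h
      apply hf
      ext1 y
      exact DFunLike.congr_fun h ⟨y, (hPm' _).1 y.2⟩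
    obtain ⟨x, hx, hst⟩ := stable_main hn hG L P hPL hP hPLi PL hPm hmax (f.comp e) hne
    exact ⟨e x, hx, fun g k h => hst g g.2 k ((hPm' _).1 h)⟩
  have hle : OpP p G ≤ (OpP p L).map L.subtype := by
    refine (Subgroup.closure_le _).2 fun x hx => ?_
    have hx' : (orderOf x).Coprime p := hx
    have hxL : x ∈ L := by
      rw [← QuotientGroup.eq_one_iff, ← orderOf_eq_one_iff]
      have o1 : orderOf (QuotientGroup.mk x : G ⧸ L) ∣ orderOf x := orderOf_map_dvd (QuotientGroup.mk' L) x
      have o2 : orderOf (QuotientGroup.mk x : G ⧸ L) ∣ p ^ k := by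
        rw [← hLi, Subgroup.index_eq_card]
        exact orderOf_dvd_natCard _
      exact Nat.eq_one_of_dvd_coprimes (hx'.pow_right k) o1 o2
    refine ⟨⟨x, hxL⟩, Subgroup.subset_closure ?_, rfl⟩
    change (orderOf (⟨x, hxL⟩ : L)).Coprime p
    rw [Subgroup.orderOf_mk]; exact hx'
  refine ⟨OpP p G, OpP_normal p G, ?_, OpP_index p⟩
  refine Nat.Coprime.coprime_dvd_left ((Subgroup.card_dvd_of_le hle).trans ?_) hcopL
  exact Subgroup.card_map_dvd _ _

/-- If `gcd(|G|, (p-1)(p²-1)⋯(pⁿ-1)) = 1` for some `n ≥ 1`, then `G` is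
`p`-nilpotent iff `G` has a normal subgroup `E` with `G/E` `p`-nilpotent such that, for
some Sylow `p`-subgroup `P` of `E`, every `n`-maximal subgroup of `P` either has a
`p`-nilpotent supplement in `G` or is 𝔘ₛ-quasinormal in `G`. -/
theorem stmt_6 {G : Type*} [Group G] [Finite G] (p n : ℕ) (hp : p.Prime) (hn : 1 ≤ n)
    (hcop : Nat.Coprime (Nat.card G) (∏ i ∈ Finset.Icc 1 n, (p ^ i - 1))) :
    IsPNilpotent p G ↔
      ∃ E : Subgroup G, ∃ _ : E.Normal, IsPNilpotent p (G ⧸ E) ∧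
        ∃ P : Subgroup G, IsSylowIn p P E ∧
          ∀ H : Subgroup G, IsNMaximalIn n H P →
            HasPNilpotentSupplement p H ∨ UsQuasinormal H := by
  constructor
  · exact pnil_forward p n hp hn
  · rintro ⟨E, hE, hQ, P, hPE, hmax⟩
    exact pnil_backward p n hp hn hcop E hQ P hPE hmax
end

section
/- Let G be a finite group and p a prime divisor of |G| with gcd(|G|, p−1) = 1. Then G is p-nilpotent if and only if G has a soluble normal subgroup H such that G/H is p-nilpotent and every maximal subgroup of every Sylow subgroup of the Fitting subgroup F(H) is 𝔘ₛ-quasinormal in G. -/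
open scoped Pointwise

universe u

namespace Stmt7

theorem le_of_sylows {G : Type*} [Group G] (K F : Subgroup G)
    (h : ∀ r : ℕ, r.Prime → ∃ R : Subgroup G, ¬ r ∣ R.relIndex F ∧ R ≤ K) : F ≤ K := by
  rw [← Subgroup.relIndex_eq_one]
  by_contra hne
  obtain ⟨r, hr, hd⟩ := Nat.exists_prime_and_dvd hne
  obtain ⟨R, h1, h2⟩ := h r hr
  exact h1 (hd.trans (Subgroup.relIndex_dvd_of_le_left F h2))

theorem mem_sup_of_permute {G : Type*} [Group G] {J R : Subgroup G}
    (h : (J : Set G) * (R : Set G) = (R : Set G) * (J : Set G)) {x : G} (hx : x ∈ J ⊔ R) :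
    ∃ r ∈ R, ∃ j ∈ J, r * j = x := by
  let X : Subgroup G :=
    { carrier := (R : Set G) * (J : Set G)
      one_mem' := ⟨1, R.one_mem, 1, J.one_mem, by simp⟩
      mul_mem' := by
        rintro _ _ ⟨r, hr, j, hj, rfl⟩ ⟨r', hr', j', hj', rfl⟩
        have : j * r' ∈ (R : Set G) * (J : Set G) := by
          rw [← h]; exact ⟨j, hj, r', hr', rfl⟩
        obtain ⟨r2, hr2, j2, hj2, e⟩ := this
        refine ⟨r * r2, R.mul_mem hr hr2, j2 * j', J.mul_mem hj2 hj', ?_⟩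
        simp only at e ⊢
        calc r * r2 * (j2 * j') = r * (r2 * j2) * j' := by group
          _ = _ := by rw [e]; group
      inv_mem' := by
        rintro _ ⟨r, hr, j, hj, rfl⟩
        rw [← h]
        exact ⟨j⁻¹, J.inv_mem hj, r⁻¹, R.inv_mem hr, by simp⟩ }
  have hle : J ⊔ R ≤ X := by
    refine sup_le ?_ ?_
    · intro j hj; exact ⟨1, R.one_mem, j, hj, by simp⟩
    · intro r hr; exact ⟨r, hr, 1, J.one_mem, by simp⟩
  obtain ⟨r, hr, j, hj, e⟩ := hle hx
  exact ⟨r, hr, j, hj, e⟩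

theorem relIndex_permute {G : Type*} [Group G] [Finite G] {J R : Subgroup G} {r : ℕ}
    (hr : r.Prime) (hR : IsPGroup r R)
    (h : (J : Set G) * (R : Set G) = (R : Set G) * (J : Set G)) :
    ∃ n : ℕ, J.relIndex (J ⊔ R) = r ^ n := by
  have := Fact.mk hr
  set X := J ⊔ R with hX
  have hR' : IsPGroup r (R.subgroupOf X) := hR.comap_subtype
  obtain ⟨n, hn⟩ := hR'.card_orbit (α := X ⧸ J.subgroupOf X) (QuotientGroup.mk 1)
  refine ⟨n, ?_⟩
  rw [Subgroup.relIndex, Subgroup.index_eq_card, ← hn]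
  have : MulAction.orbit (R.subgroupOf X) (QuotientGroup.mk 1 : X ⧸ J.subgroupOf X)
      = Set.univ := by
    ext y
    simp only [Set.mem_univ, iff_true]
    obtain ⟨x, rfl⟩ := QuotientGroup.mk_surjective y
    obtain ⟨r, hr, j, hj, e⟩ := mem_sup_of_permute h x.2
    have hrX : r ∈ X := (le_sup_right : R ≤ J ⊔ R) hr
    refine ⟨⟨⟨r, hrX⟩, hr⟩, ?_⟩
    change (QuotientGroup.mk ((⟨r, hrX⟩ : X) * 1) : X ⧸ J.subgroupOf X) = QuotientGroup.mk x
    rw [QuotientGroup.eq]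
    change (r * 1)⁻¹ * (x : G) ∈ J
    rw [← e]; simpa using hj
  rw [this]
  exact (Nat.card_congr (Equiv.Set.univ _)).symm

/-- maximal S-invariant -/
theorem exists_max_inv {G : Type*} [Group G] [Finite G] {q : ℕ} (hq : q.Prime)
    (S Q N : Subgroup G) (hS : IsPGroup q S) [Q.Normal] [N.Normal] (hQS : Q ≤ S) (hNQ : N < Q) :
    ∃ M : Subgroup G, N ≤ M ∧ IsMaximalIn M Q ∧ S ≤ Subgroup.normalizer (M : Set G) := by
  have := Fact.mk hq
  let P : Subgroup G → Prop := fun M => N ≤ M ∧ M < Q ∧ S ≤ Subgroup.normalizer (M : Set G)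
  have hPN : P N := ⟨le_rfl, hNQ, by rw [Subgroup.normalizer_eq_top]; exact le_top⟩
  obtain ⟨M, hNM, hM⟩ := (Set.toFinite {M | P M}).exists_le_maximal hPN
  obtain ⟨⟨h1, h2, h3⟩, hmax⟩ := hM
  refine ⟨M, h1, ⟨h2, ?_⟩, h3⟩
  have hMS : M ≤ S := h2.le.trans hQS
  -- find central element
  let M' := M.subgroupOf S
  have hM'n : M'.Normal := (Subgroup.normal_subgroupOf_iff_le_normalizer hMS).2 h3
  let Q' := (Q.subgroupOf S).map (QuotientGroup.mk' M')
  have : Q'.Normal := Subgroup.Normal.map inferInstance _ (QuotientGroup.mk'_surjective _)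
  have hpq : IsPGroup q (S ⧸ M') := hS.to_quotient M'
  have hQ'p : IsPGroup q Q' := hpq.to_subgroup _
  have hQ'nt : Q' ≠ ⊥ := by
    intro h
    rw [Subgroup.map_eq_bot_iff, QuotientGroup.ker_mk'] at h
    obtain ⟨x, hx, hxM⟩ := SetLike.exists_of_lt h2
    exact hxM (h (show (⟨x, hQS hx⟩ : S) ∈ Q.subgroupOf S from hx))
  have hc : ∃ z ∈ Q', z ≠ 1 ∧ z ∈ Subgroup.center (S ⧸ M') := by
    have hpa : IsPGroup q (ConjAct (S ⧸ M')) := hpq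
    have : Nontrivial Q' := (Subgroup.nontrivial_iff_ne_bot _).2 hQ'nt
    have hd : q ∣ Nat.card Q' := (hQ'p.card_eq_or_dvd).resolve_left (by
      rw [Subgroup.card_eq_one]; exact hQ'nt)
    obtain ⟨b, hb, hb1⟩ := hpa.exists_fixed_point_of_prime_dvd_card_of_fixed_point (Q') hd
      (a := 1) (by intro g; simp)
    refine ⟨b, b.2, fun h => hb1 (Subtype.ext h.symm), ?_⟩
    rw [Subgroup.mem_center_iff]
    intro g
    have := congrArg Subtype.val (hb (ConjAct.toConjAct g))
    rw [ConjAct.Subgroup.val_conj_smul] at this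
    rw [ConjAct.smul_def] at this
    simp only [ConjAct.ofConjAct_toConjAct] at this
    rw [mul_inv_eq_iff_eq_mul] at this
    exact this
  obtain ⟨_, ⟨z, hzQ, rfl⟩, hz1, hzc⟩ := hc
  have hzM : (z : G) ∉ M := fun h => hz1 ((QuotientGroup.eq_one_iff _).2 h)
  have hzcomm : ∀ s : S, (s * z * (s : G)⁻¹ * (z : G)⁻¹) ∈ M := by
    intro s
    rw [Subgroup.mem_center_iff] at hzc
    have := hzc (QuotientGroup.mk s)
    have h4 : (QuotientGroup.mk (s * z * s⁻¹ * z⁻¹) : S ⧸ M') = 1 := by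
      simp only [QuotientGroup.mk_mul, QuotientGroup.mk_inv]
      have h5 : (QuotientGroup.mk s : S ⧸ M') * QuotientGroup.mk z = QuotientGroup.mk z * QuotientGroup.mk s := this
      rw [h5]; group
    have h7 := (QuotientGroup.eq_one_iff (s * z * s⁻¹ * z⁻¹)).1 h4
    exact h7
  -- Subgroup of elements of Q centralised by S mod M
  have inv_of : ∀ L : Subgroup G, M ≤ L → (∀ l ∈ L, ∀ s ∈ S, s * l * s⁻¹ * l⁻¹ ∈ M) →
      S ≤ Subgroup.normalizer (L : Set G) := by
    intro L hML hL s hs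
    have key : ∀ t ∈ S, ∀ l ∈ L, t * l * t⁻¹ ∈ L := by
      intro t ht l hl
      have := L.mul_mem (hML (hL l hl t ht)) hl
      simpa using this
    rw [Subgroup.mem_normalizer_iff]
    intro l
    refine ⟨key s hs l, fun h => ?_⟩
    have := key s⁻¹ (S.inv_mem hs) _ h
    simpa [mul_assoc] using this
  let C : Subgroup G :=
    { carrier := {l | l ∈ S ∧ ∀ s ∈ S, s * l * s⁻¹ * l⁻¹ ∈ M}
      one_mem' := ⟨S.one_mem, by intro s _; simp⟩
      mul_mem' := by
        rintro a b ⟨ha, ha'⟩ ⟨hb, hb'⟩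
        refine ⟨S.mul_mem ha hb, fun s hs => ?_⟩
        have h6 : a * (s * b * s⁻¹ * b⁻¹) * a⁻¹ ∈ M :=
          (Subgroup.mem_normalizer_iff.1 (h3 ha) _).1 (hb' s hs)
        have := M.mul_mem (ha' s hs) h6
        convert this using 1; group
      inv_mem' := by
        rintro a ⟨ha, ha'⟩
        refine ⟨S.inv_mem ha, fun s hs => ?_⟩
        have h6 := (Subgroup.mem_normalizer_iff.1 (h3 (S.inv_mem ha)) _).1 (M.inv_mem (ha' s hs))
        convert h6 using 1; group }
  have hMC : M ≤ C := by
    intro m hm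
    refine ⟨hMS hm, fun s hs => M.mul_mem ?_ (M.inv_mem hm)⟩
    exact (Subgroup.mem_normalizer_iff.1 (h3 hs) _).1 hm
  have hCQ : Q ≤ C := by
    have hP : P (Q ⊓ C) ∨ Q ⊓ C = Q := by
      rcases eq_or_ne (Q ⊓ C) Q with h | h
      · exact Or.inr h
      · refine Or.inl ⟨le_inf hNQ.le (h1.trans hMC), lt_of_le_of_ne inf_le_left h, ?_⟩
        exact inv_of _ (le_inf h2.le hMC) (fun l hl s hs => hl.2.2 s hs)
    rcases hP with hP | hP
    · exfalso
      have := hmax hP (le_inf h2.le hMC)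
      exact hzM (this ⟨hzQ, z.2, fun s hs => hzcomm ⟨s, hs⟩⟩)
    · exact inf_eq_left.1 hP
  intro L hML hLQ
  by_contra hne
  have hPL : P L := ⟨h1.trans hML.le, lt_of_le_of_ne hLQ hne,
    inv_of L hML.le (fun l hl s hs => (hCQ (hLQ hl)).2 s hs)⟩
  exact absurd (hmax hPL hML.le) (not_le_of_gt hML)

end Stmt7

namespace Stmt7

theorem hyper_step {G : Type*} [Group G] [Finite G] (E N W : Subgroup G)
    [E.Normal] [N.Normal] [W.Normal]
    (hN : ∀ A B : Subgroup G, IsChiefFactor A B → A ≤ N → (B.relIndex A).Prime)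
    (hW : W ≠ ⊥) (hmin : ∀ L : Subgroup G, L.Normal → L ≤ W → L = ⊥ ∨ L = W)
    (hle : W ≤ N ⊔ E) (hWE : W ⊓ E = ⊥) : (Nat.card W).Prime := by
  have hAE : ((W ⊔ E) ⊓ N) ⊔ E = W ⊔ E := by
    apply le_antisymm (sup_le inf_le_left le_sup_right)
    refine sup_le ?_ le_sup_right
    intro w hw
    obtain ⟨n, hn, e, he, h⟩ := Subgroup.mem_sup_of_normal_right.1 (hle hw)
    have hn' : n ∈ W ⊔ E := by
      have : n = w * e⁻¹ := by rw [← h]; group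
      rw [this]
      exact Subgroup.mul_mem_sup hw (E.inv_mem he)
    rw [← h]
    exact Subgroup.mul_mem_sup ⟨hn', hn⟩ he
  have hcard : (E ⊓ N).relIndex ((W ⊔ E) ⊓ N) = Nat.card W := by
    have h1 : E ⊓ N = E ⊓ ((W ⊔ E) ⊓ N) := by
      rw [← inf_assoc, inf_eq_left.2 (le_sup_right : E ≤ W ⊔ E)]
    rw [h1, Subgroup.inf_relIndex_right, ← Subgroup.relIndex_sup_right, hAE,
      Subgroup.relIndex_sup_right, ← Subgroup.inf_relIndex_right, inf_comm, hWE,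
      Subgroup.relIndex_bot_left]
  rw [← hcard]
  apply hN _ _ _ inf_le_right
  refine ⟨inferInstance, inferInstance, ?_, ?_⟩
  · refine lt_of_le_of_ne (inf_le_inf_right _ le_sup_right) ?_
    intro h
    rw [← h, Subgroup.relIndex_self] at hcard
    exact hW ((Subgroup.card_eq_one).1 hcard.symm)
  · intro L hL h1 h2
    have h3 : (L ⊔ E) ⊓ W = ⊥ ∨ (L ⊔ E) ⊓ W = W := hmin _ inferInstance inf_le_right
    rcases h3 with h3 | h3
    · apply not_le_of_gt h1
      refine le_inf ?_ (h2.le.trans inf_le_right)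
      intro l hl
      obtain ⟨w, hw, e, he, h⟩ := Subgroup.mem_sup_of_normal_right.1 (h2.le hl).1
      have hw' : w ∈ (L ⊔ E) ⊓ W := by
        refine ⟨?_, hw⟩
        have : w = l * e⁻¹ := by rw [← h]; group
        rw [this]
        exact Subgroup.mul_mem_sup hl (E.inv_mem he)
      rw [h3, Subgroup.mem_bot] at hw'
      rw [← h, hw', one_mul]; exact he
    · apply not_le_of_gt h2
      rw [inf_eq_right] at h3
      intro a ha
      have ha' : a ∈ L ⊔ E := (sup_le h3 le_sup_right) ha.1
      obtain ⟨l, hl, e, he, h⟩ := Subgroup.mem_sup_of_normal_right.1 ha'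
      have hlN : l ∈ N := (h2.le hl).2
      have he' : e ∈ N := by
        have : e = l⁻¹ * a := by rw [← h]; group
        rw [this]; exact N.mul_mem (N.inv_mem hlN) ha.2
      rw [← h]
      exact L.mul_mem hl (h1.le ⟨he, he'⟩)

theorem hyper_prime {G : Type*} [Group G] [Finite G] (W : Subgroup G) [W.Normal]
    (hW : W ≠ ⊥) (hmin : ∀ L : Subgroup G, L.Normal → L ≤ W → L = ⊥ ∨ L = W)
    (hle : W ≤ UHypercenter G) : (Nat.card W).Prime := by
  have key : ∀ S : Set (Subgroup G), S.Finite → (∀ N ∈ S, N.Normal ∧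
    ∀ A B : Subgroup G, IsChiefFactor A B → A ≤ N → (B.relIndex A).Prime) →
    W ≤ sSup S → (Nat.card W).Prime := by
    intro S hS
    induction S, hS using Set.Finite.induction_on with
    | empty => intro _ h; simp at h; exact absurd h hW
    | @insert N S _ _ ih =>
      intro h hWS
      have hE : (sSup S).Normal :=
        Subgroup.sSup_normal S (fun K hK => (h K (Set.mem_insert_of_mem _ hK)).1)
      rw [sSup_insert] at hWS
      have hNn := (h N (Set.mem_insert _ _)).1
      rcases hmin (W ⊓ sSup S) inferInstance inf_le_left with h1 | h1
      · exact hyper_step (sSup S) N W (h N (Set.mem_insert _ _)).2 hW hmin hWS h1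
      · exact ih (fun K hK => h K (Set.mem_insert_of_mem _ hK)) (inf_eq_left.1 h1)
  exact key _ (Set.toFinite _) (fun N hN => hN) hle

theorem maximal_prime {G : Type*} [Group G] [Finite G] {q : ℕ} (hq : q.Prime)
    {M Q : Subgroup G} (hQ : IsPGroup q Q) (h : IsMaximalIn M Q) : M.relIndex Q = q := by
  have := Fact.mk hq
  have hlt := h.1
  let M' := M.subgroupOf Q
  have hM' : IsPGroup q M' := hQ.to_subgroup _
  obtain ⟨m, hm⟩ := IsPGroup.iff_card.1 hQ
  obtain ⟨k, hk⟩ := IsPGroup.iff_card.1 hM'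
  have hidx : M.relIndex Q * q ^ k = q ^ m := by
    rw [← hm, ← hk]; exact Subgroup.index_mul_card M'
  have hkm : k < m := by
    by_contra hcon
    have h1 : q ^ m ≤ q ^ k := Nat.pow_le_pow_right hq.pos (not_lt.1 hcon)
    have h2 : M.relIndex Q ≤ 1 := by
      by_contra h3
      have : 2 * q ^ k ≤ M.relIndex Q * q ^ k := Nat.mul_le_mul_right _ (by omega)
      have := Nat.pow_pos (n := k) hq.pos
      omega
    have h0 : M.relIndex Q ≠ 0 := by
      intro h0; rw [h0, zero_mul] at hidx
      exact (pow_ne_zero m hq.ne_zero) hidx.symm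
    have : M.relIndex Q = 1 := by omega
    exact not_le_of_gt hlt (Subgroup.relIndex_eq_one.1 this)
  obtain ⟨K, hK, hMK⟩ := Sylow.exists_subgroup_card_pow_prime_le q (m := k + 1)
    (by rw [hm]; exact pow_dvd_pow q hkm) M' hk (by omega)
  have hKQ : K.map Q.subtype = Q := by
    apply h.2
    · refine lt_of_le_of_ne ?_ ?_
      · intro x hx; exact ⟨⟨x, hlt.le hx⟩, hMK hx, rfl⟩
      · intro he
        have : M' = K := by
          change M.subgroupOf Q = K
          rw [he]
          ext x; simp [Subgroup.mem_subgroupOf]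
        rw [← this, hk] at hK
        exact absurd (Nat.pow_right_injective hq.two_le hK) (by omega)
    · rintro _ ⟨x, _, rfl⟩; exact x.2
  have hcQ : Nat.card Q = q ^ (k + 1) := by
    rw [← hK]
    conv_lhs => rw [← hKQ]
    exact Subgroup.card_subtype Q K
  rw [hm] at hcQ
  rw [hcQ, pow_succ, mul_comm (q ^ k)] at hidx
  exact Nat.eq_of_mul_eq_mul_right (Nat.pow_pos hq.pos) hidx

theorem normalizes_of_sperm {G : Type*} [Group G] [Finite G] {q r : ℕ} (hq : q.Prime)
    (hr : r.Prime) (hqr : q ≠ r) {Q J R M : Subgroup G} [Q.Normal] (hQ : IsPGroup q Q)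
    (hR : IsPGroup r R) (h : (J : Set G) * (R : Set G) = (R : Set G) * (J : Set G))
    (hM : J ⊓ Q = M) : R ≤ Subgroup.normalizer (M : Set G) := by
  have := Fact.mk hq
  obtain ⟨n, hn⟩ := relIndex_permute hr hR h
  have hA : (J ⊔ R) ⊓ Q ≤ J := by
    rw [← Subgroup.relIndex_eq_one]
    -- q-power
    have hAp : IsPGroup q ((J ⊔ R) ⊓ Q : Subgroup G) := hQ.to_inf_right
    obtain ⟨m, hm⟩ := hAp.index (J.subgroupOf ((J ⊔ R) ⊓ Q))
    have hm' : J.relIndex ((J ⊔ R) ⊓ Q) = q ^ m := hm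
    -- divides card product
    have hd : J.relIndex ((J ⊔ R) ⊓ Q) ∣ r ^ n := by
      rw [← hn]
      -- work inside X
      let X := J ⊔ R
      have e1 : J.relIndex (X ⊓ Q) * (X ⊓ Q).relIndex X = (J ⊓ Q).relIndex X := by
        rw [← Subgroup.inf_relIndex_right J (X ⊓ Q),
          Subgroup.relIndex_mul_relIndex _ _ _ inf_le_right inf_le_left]
        congr 1
        rw [← inf_assoc, inf_eq_left.2 (le_sup_left : J ≤ X)]
      have e2 : (J ⊓ Q).relIndex J * J.relIndex X = (J ⊓ Q).relIndex X :=
        Subgroup.relIndex_mul_relIndex _ _ _ inf_le_left le_sup_left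
      have e3 : (J ⊓ Q).relIndex J ∣ (X ⊓ Q).relIndex X := by
        rw [Subgroup.inf_relIndex_left, Subgroup.inf_relIndex_left]
        have h5 : Q.relIndex J * (J ⊔ Q).relIndex (X ⊔ Q) = Q.relIndex X := by
          rw [← Subgroup.relIndex_sup_right (H := J), ← Subgroup.relIndex_sup_right (H := X)]
          exact Subgroup.relIndex_mul_relIndex _ _ _ le_sup_right
            (sup_le_sup_right le_sup_left _)
        exact ⟨_, h5.symm⟩
      obtain ⟨c, hc⟩ := e3
      have hpos : 0 < (J ⊓ Q).relIndex J := Nat.pos_of_ne_zero (Subgroup.index_ne_zero_of_finite (H := (J ⊓ Q).subgroupOf J))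
      refine ⟨c, ?_⟩
      apply Nat.eq_of_mul_eq_mul_left hpos
      change (J ⊓ Q).relIndex J * J.relIndex X = (J ⊓ Q).relIndex J * (J.relIndex (X ⊓ Q) * c)
      rw [e2, ← e1, hc]; ring
    rw [hm'] at hd ⊢
    have hco : Nat.Coprime (q ^ m) (r ^ n) := Nat.Coprime.pow _ _ ((Nat.coprime_primes hq hr).2 hqr)
    exact Nat.Coprime.eq_one_of_dvd hco hd
  have key : ∀ t ∈ R, ∀ x ∈ M, t * x * t⁻¹ ∈ M := by
    intro t ht x hx
    rw [← hM] at hx ⊢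
    have h1 : t * x * t⁻¹ ∈ Q := Subgroup.Normal.conj_mem inferInstance x hx.2 t
    have ht' : t ∈ J ⊔ R := (le_sup_right : R ≤ J ⊔ R) ht
    have h2 : t * x * t⁻¹ ∈ J ⊔ R :=
      mul_mem (mul_mem ht' ((le_sup_left : J ≤ J ⊔ R) hx.1)) (inv_mem ht')
    exact ⟨hA ⟨h2, h1⟩, h1⟩
  intro t ht
  rw [Subgroup.mem_normalizer_iff]
  intro l
  refine ⟨key t ht l, fun h => ?_⟩
  have := key t⁻¹ (R.inv_mem ht) _ h
  simpa [mul_assoc] using this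

theorem head_prime {G : Type*} [Group G] [Finite G] {q : ℕ} (hq : q.Prime)
    {Q N : Subgroup G} (hQ : IsPGroup q Q) (hQN : IsChiefFactor Q N)
    (hus : ∀ M : Subgroup G, IsMaximalIn M Q → UsQuasinormal M) : N.relIndex Q = q := by
  have := Fact.mk hq
  obtain ⟨hQn, hNn, hlt, hch⟩ := hQN
  have hch' : ∀ L : Subgroup G, L.Normal → N ≤ L → L ≤ Q → L = N ∨ L = Q := by
    intro L hL h1 h2
    by_contra hcon
    push Not at hcon
    exact hch L hL (lt_of_le_of_ne h1 hcon.1.symm) (lt_of_le_of_ne h2 hcon.2)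
  obtain ⟨S, hQS⟩ := hQ.exists_le_sylow
  obtain ⟨M, hNM, hMmax, hSM⟩ := exists_max_inv hq S Q N S.isPGroup' hQS hlt
  have hcore : M.normalCore = N := by
    refine (hch' _ inferInstance (Subgroup.normal_le_normalCore.2 hNM)
      ((Subgroup.normalCore_le M).trans hMmax.1.le)).resolve_right ?_
    intro h
    exact not_le_of_gt hMmax.1 (h ▸ Subgroup.normalCore_le M)
  by_cases hMN : M = N
  · rw [← hMN]; exact maximal_prime hq hQ hMmax
  obtain ⟨T, hT, hsp, hU⟩ := hus M hMmax
  subst hcore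
  set N := M.normalCore with hNdef
  rcases hch' (Q ⊓ (T ⊔ N)) inferInstance (le_inf hlt.le le_sup_right) inf_le_left with h | h
  · exfalso
    -- M is normal
    have hJQ : (M ⊔ T) ⊓ Q = M := by
      apply le_antisymm
      · rintro x ⟨hx1, hx2⟩
        obtain ⟨m, hm, t, ht, rfl⟩ := Subgroup.mem_sup_of_normal_right.1 hx1
        have ht' : t ∈ Q := by
          have := Q.mul_mem (Q.inv_mem (hMmax.1.le hm)) hx2
          simpa using this
        have : t ∈ N := by
          rw [← h]; exact ⟨ht', (le_sup_left : T ≤ T ⊔ N) ht⟩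
        exact M.mul_mem hm (hNM this)
      · exact le_inf le_sup_left hMmax.1.le
    have htop : (⊤ : Subgroup G) ≤ Subgroup.normalizer (M : Set G) := by
      apply le_of_sylows
      intro r hr
      have := Fact.mk hr
      by_cases hrq : r = q
      · subst hrq
        exact ⟨S, by rw [Subgroup.relIndex_top_right]; exact S.not_dvd_index, hSM⟩
      · obtain R : Sylow r G := Classical.arbitrary _
        have hRi : ¬ r ∣ (R : Subgroup G).relIndex ⊤ := by
          rw [Subgroup.relIndex_top_right]; exact R.not_dvd_index
        refine ⟨R, hRi, ?_⟩
        exact normalizes_of_sperm hq hr (Ne.symm hrq) hQ R.isPGroup'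
          (hsp r hr R ⟨le_top, R.isPGroup', hRi⟩) hJQ
    have hMn : M.Normal := Subgroup.normalizer_eq_top_iff.1 (top_le_iff.1 htop)
    exact hMN (le_antisymm (Subgroup.normal_le_normalCore.2 le_rfl) hNM)
  · have hQT : Q ≤ T ⊔ N := inf_eq_left.1 h
    let π := QuotientGroup.mk' N
    let W := Q.map π
    have hWn : W.Normal := Subgroup.Normal.map inferInstance _ (QuotientGroup.mk'_surjective _)
    have hWmin : ∀ L : Subgroup (G ⧸ N), L.Normal → L ≤ W → L = ⊥ ∨ L = W := by
      intro L hL hLW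
      have h1 : N ≤ L.comap π := by
        intro x hx
        have : π x = 1 := (QuotientGroup.eq_one_iff x).2 hx
        rw [Subgroup.mem_comap, this]; exact L.one_mem
      have h2 : L.comap π ≤ Q := by
        intro x hx
        obtain ⟨y, hy, hxy⟩ := hLW hx
        have : y⁻¹ * x ∈ N := QuotientGroup.eq.1 hxy
        have := Q.mul_mem hy (hlt.le this)
        simpa using this
      have hs : (L.comap π).map π = L :=
        Subgroup.map_comap_eq_self_of_surjective (QuotientGroup.mk'_surjective _) L
      rcases hch' (L.comap π) inferInstance h1 h2 with h3 | h3
      · left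
        rw [← hs, h3, Subgroup.map_eq_bot_iff, QuotientGroup.ker_mk']
      · right
        rw [← hs, h3]
    have hcard : N.relIndex Q = Nat.card W := by
      have := Subgroup.relIndex_ker Q π
      rwa [QuotientGroup.ker_mk'] at this
    have hWbot : W ≠ ⊥ := by
      intro hb
      rw [Subgroup.map_eq_bot_iff, QuotientGroup.ker_mk'] at hb
      exact not_le_of_gt hlt hb
    have hWU : W ≤ UHypercenter (G ⧸ N) := by
      have hUn : (UHypercenter (G ⧸ N)).Normal := Subgroup.sSup_normal _ (fun K hK => hK.1)
      rcases hWmin (W ⊓ UHypercenter (G ⧸ N)) inferInstance inf_le_left with h1 | h1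
      · exfalso
        apply hMN
        refine le_antisymm ?_ hNM
        intro m hm
        obtain ⟨t, ht, n, hn, rfl⟩ := Subgroup.mem_sup_of_normal_right.1 (hQT (hMmax.1.le hm))
        have htM : t ∈ M := by
          have := M.mul_mem hm (M.inv_mem (hNM hn))
          simpa using this
        have h2 : (π t) ∈ W ⊓ UHypercenter (G ⧸ N) :=
          ⟨⟨t, hMmax.1.le htM, rfl⟩, hU t ⟨htM, ht⟩⟩
        rw [h1, Subgroup.mem_bot] at h2
        have h3 : t ∈ N := (QuotientGroup.eq_one_iff t).1 h2
        exact N.mul_mem h3 hn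
      · exact inf_eq_left.1 h1
    have hp := hyper_prime W hWbot hWmin hWU
    rw [hcard]
    have hWp : IsPGroup q W := hQ.map π
    rcases hWp.card_eq_or_dvd with h1 | h1
    · rw [h1] at hp; exact absurd hp Nat.not_prime_one
    · exact ((Nat.prime_dvd_prime_iff_eq hq hp).1 h1).symm

end Stmt7

namespace Stmt7

/-- elements acting trivially on `Q/N` -/
def hcent {G : Type*} [Group G] (Q N : Subgroup G) [N.Normal] : Subgroup G :=
  (Subgroup.centralizer (Q.map (QuotientGroup.mk' N) : Set (G ⧸ N))).comap (QuotientGroup.mk' N)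

theorem mem_hcent {G : Type*} [Group G] {Q N : Subgroup G} [N.Normal] {g : G} :
    g ∈ hcent Q N ↔ ∀ v ∈ Q, g * v * g⁻¹ * v⁻¹ ∈ N := by
  have key : ∀ v : G, g * v * g⁻¹ * v⁻¹ ∈ N ↔
      (QuotientGroup.mk v : G ⧸ N) * QuotientGroup.mk g = QuotientGroup.mk g * QuotientGroup.mk v := by
    intro v
    rw [← QuotientGroup.eq_one_iff]
    simp only [QuotientGroup.mk_mul, QuotientGroup.mk_inv]
    rw [mul_inv_eq_one, mul_inv_eq_iff_eq_mul]
    exact eq_comm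
  unfold hcent
  rw [Subgroup.mem_comap, Subgroup.mem_centralizer_iff]
  constructor
  · intro h v hv
    exact (key v).2 (h _ ⟨v, hv, rfl⟩)
  · rintro h _ ⟨v, hv, rfl⟩
    exact (key v).1 (h v hv)

/-- The conjugation action on `Q/N`. -/
noncomputable def act {G : Type*} [Group G] (Q N : Subgroup G) [N.Normal]
    [(Q.map (QuotientGroup.mk' N)).Normal] : G →* MulAut (Q.map (QuotientGroup.mk' N)) :=
  MulAut.conjNormal.comp (QuotientGroup.mk' N)

theorem ker_act_le {G : Type*} [Group G] (Q N : Subgroup G) [N.Normal]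
    [(Q.map (QuotientGroup.mk' N)).Normal] : (act Q N).ker ≤ hcent Q N := by
  intro g hg
  rw [mem_hcent]
  intro v hv
  rw [MonoidHom.mem_ker] at hg
  have h1 := congrArg Subtype.val (DFunLike.congr_fun hg
    (⟨QuotientGroup.mk' N v, ⟨v, hv, rfl⟩⟩ : Q.map (QuotientGroup.mk' N)))
  have h2 : (QuotientGroup.mk g : G ⧸ N) * QuotientGroup.mk v * (QuotientGroup.mk g)⁻¹ =
    QuotientGroup.mk v := h1
  rw [← QuotientGroup.eq_one_iff]
  simp only [QuotientGroup.mk_mul, QuotientGroup.mk_inv]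
  rw [h2, mul_inv_cancel]

theorem head_act {G : Type*} [Group G] [Finite G] {q : ℕ} (hq : q.Prime)
    {Q N : Subgroup G} [Q.Normal] [N.Normal] (h : N.relIndex Q = q) :
    commutator G ≤ hcent Q N ∧ (Nat.Coprime (Nat.card G) (q - 1) → hcent Q N = ⊤) := by
  have := Fact.mk hq
  let W := Q.map (QuotientGroup.mk' N)
  have hWn : W.Normal := Subgroup.Normal.map inferInstance _ (QuotientGroup.mk'_surjective _)
  have hcard : Nat.card W = q := by
    have := Subgroup.relIndex_ker Q (QuotientGroup.mk' N)
    rw [QuotientGroup.ker_mk'] at this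
    rw [← h]; exact this.symm
  have : IsCyclic W := isCyclic_of_prime_card hcard
  constructor
  · refine le_trans ?_ (ker_act_le Q N)
    have e := IsCyclic.mulAutMulEquiv W
    have h1 := Abelianization.commutator_subset_ker (e.toMonoidHom.comp (act Q N))
    intro g hg
    have h2 := h1 hg
    rw [MonoidHom.mem_ker] at h2 ⊢
    exact e.injective (h2.trans (map_one e).symm)
  · intro hco
    have hfin : Finite (MulAut W) := (IsCyclic.mulAutMulEquiv W).toEquiv.finite_iff.2 inferInstance
    have hc2 : Nat.card (MulAut W) = q - 1 := by
      rw [IsCyclic.card_mulAut, hcard, Nat.totient_prime hq]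
    have h1 : Nat.card (act Q N).range ∣ q - 1 := by
      rw [← hc2]; exact Subgroup.card_subgroup_dvd_card _
    have h2 : Nat.card (act Q N).range ∣ Nat.card G := Subgroup.card_range_dvd _
    have h3 : Nat.card (act Q N).range = 1 := Nat.eq_one_of_dvd_coprimes hco h2 h1
    rw [Subgroup.card_eq_one, MonoidHom.range_eq_bot_iff] at h3
    rw [eq_top_iff]
    refine le_trans ?_ (ker_act_le Q N)
    rw [h3, MonoidHom.ker_one]

theorem exists_head {G : Type*} [Group G] [Finite G] {Q C : Subgroup G} [hQ : Q.Normal]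
    [hC : C.Normal] (h : C < Q) : ∃ N, IsChiefFactor Q N ∧ C ≤ N := by
  obtain ⟨N, hCN, hN⟩ := (Set.toFinite {N : Subgroup G | N.Normal ∧ N < Q}).exists_le_maximal
    (show C ∈ {N : Subgroup G | N.Normal ∧ N < Q} from ⟨hC, h⟩)
  refine ⟨N, ⟨hQ, hN.1.1, hN.1.2, ?_⟩, hCN⟩
  intro L hL h1 h2
  exact not_le_of_gt h1 (hN.2 ⟨hL, h2⟩ h1.le)

theorem nongen {Q : Type*} [Group Q] [Finite Q] {q : ℕ} (hq : q.Prime) (hQ : IsPGroup q Q)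
    (K : Subgroup Q) (h : K ⊔ commutator Q = ⊤) : K = ⊤ := by
  have := Fact.mk hq
  have hnil : Group.IsNilpotent Q := hQ.isNilpotent
  by_contra hK
  obtain ⟨M, hM, hKM⟩ := (eq_top_or_exists_le_coatom K).resolve_left hK
  have hMn : M.Normal :=
    Subgroup.NormalizerCondition.normal_of_coatom M (Group.normalizerCondition_of_isNilpotent) hM
  have hcM : commutator Q ≤ M := by
    have hidx : M.relIndex ⊤ = q := maximal_prime hq (Q := ⊤)
      (hQ.to_subgroup ⊤) ⟨hM.lt_top, fun L h1 _ => hM.2 L h1⟩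
    rw [Subgroup.relIndex_top_right, Subgroup.index_eq_card] at hidx
    have : IsCyclic (Q ⧸ M) := isCyclic_of_prime_card hidx
    let _ := IsCyclic.commGroup (α := Q ⧸ M)
    have h1 := Abelianization.commutator_subset_ker (QuotientGroup.mk' M)
    rwa [QuotientGroup.ker_mk'] at h1
  exact hM.1 (top_le_iff.1 (h ▸ sup_le hKM hcM))

theorem pow_mem_coprime {G : Type*} [Group G] [Finite G] {q n : ℕ} {Q N : Subgroup G}
    (hQ : IsPGroup q Q) (hn : Nat.Coprime q n) {v : G} (hv : v ∈ Q) (h : v ^ n ∈ N) : v ∈ N := by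
  have h1 := hQ.orderOf_coprime hn ⟨v, hv⟩
  rw [Subgroup.orderOf_mk] at h1
  obtain ⟨m, hm⟩ := exists_pow_eq_self_of_coprime h1.symm
  rw [← hm]; exact N.pow_mem h m

theorem act_triv_mod {G : Type*} [Group G] [Finite G] {q : ℕ}
    {Q X Y : Subgroup G} [Q.Normal] [X.Normal] (hQ : IsPGroup q Q)
    (hY : Nat.Coprime q (Nat.card Y)) (hYX : Y ≤ X)
    (hX : X ≤ Q ⊔ Subgroup.centralizer (Q : Set G) ⊔ Y)
    (hh : ∀ N, IsChiefFactor Q N → ∀ x ∈ X, ∀ v ∈ Q, x * v * x⁻¹ * v⁻¹ ∈ N) :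
    ∀ x ∈ X, ∀ v ∈ Q, x * v * x⁻¹ * v⁻¹ ∈ ⁅Q, Q⁆ := by
  set D := ⁅Q, Q⁆ with hD
  have hDQ : D ≤ Q := Subgroup.commutator_le_right Q Q
  let π := QuotientGroup.mk' D
  have hXn : (X.map π).Normal :=
    Subgroup.Normal.map inferInstance _ (QuotientGroup.mk'_surjective _)
  let C := Q ⊓ (Subgroup.centralizer (X.map π : Set (G ⧸ D))).comap π
  have hCn : C.Normal := inferInstance
  have hDC : D ≤ C := by
    refine le_inf hDQ ?_
    intro d hd
    have : π d = 1 := (QuotientGroup.eq_one_iff d).2 hd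
    rw [Subgroup.mem_comap, this]; exact Subgroup.one_mem _
  suffices hCQ : Q ≤ C by
    intro x hx v hv
    have h1 := Subgroup.mem_centralizer_iff.1 (hCQ hv).2 _ ⟨x, hx, rfl⟩
    have h2 : (QuotientGroup.mk x : G ⧸ D) * QuotientGroup.mk v =
      QuotientGroup.mk v * QuotientGroup.mk x := h1
    rw [← QuotientGroup.eq_one_iff]
    simp only [QuotientGroup.mk_mul, QuotientGroup.mk_inv]
    rw [h2]; group
  by_contra hne
  obtain ⟨N, hN, hCN⟩ := exists_head (lt_of_le_of_ne (inf_le_left : C ≤ Q)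
    (fun h => hne (le_of_eq h.symm)))
  have hNn := hN.2.1
  apply not_le_of_gt hN.2.2.1
  intro v hv
  apply pow_mem_coprime hQ hY hv
  -- averaging
  let W := Q.map π
  have hWn : W.Normal := Subgroup.Normal.map inferInstance _ (QuotientGroup.mk'_surjective _)
  have hWc : ∀ a b : W, a * b = b * a := by
    rintro ⟨_, a, ha, rfl⟩ ⟨_, b, hb, rfl⟩
    apply Subtype.ext
    change (QuotientGroup.mk a : G ⧸ D) * QuotientGroup.mk b = QuotientGroup.mk b * QuotientGroup.mk a
    have h1 : a * b * a⁻¹ * b⁻¹ ∈ D := Subgroup.commutator_mem_commutator ha hb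
    rw [← QuotientGroup.eq_one_iff] at h1
    simp only [QuotientGroup.mk_mul, QuotientGroup.mk_inv] at h1
    rwa [mul_inv_eq_one, mul_inv_eq_iff_eq_mul] at h1
  let _ : CommGroup W := { (inferInstance : Group W) with mul_comm := hWc }
  let _ := Fintype.ofFinite Y
  let φ : G →* MulAut W := MulAut.conjNormal.comp π
  let v' : W := ⟨π v, v, hv, rfl⟩
  let w : W := ∏ y : Y, φ y v'
  have hw : ∀ y : Y, φ y w = w := by
    intro y
    change φ y (∏ z : Y, φ z v') = ∏ z : Y, φ z v'
    rw [map_prod]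
    refine Fintype.prod_equiv (Equiv.mulLeft y) _ _ ?_
    intro z
    simp [map_mul]
  obtain ⟨w0, hw0, hw0'⟩ := w.2
  have hw0C : w0 ∈ C := by
    refine ⟨hw0, ?_⟩
    change π w0 ∈ Subgroup.centralizer (X.map π : Set (G ⧸ D))
    rw [Subgroup.mem_centralizer_iff]
    -- X̄ centralises w
    have hle : X ≤ (Subgroup.centralizer {π w0}).comap π := by
      refine hX.trans (sup_le (sup_le ?_ ?_) ?_)
      · intro a ha
        rw [Subgroup.mem_comap, Subgroup.mem_centralizer_singleton_iff]
        exact congrArg Subtype.val (hWc ⟨π a, a, ha, rfl⟩ ⟨π w0, w0, hw0, rfl⟩)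
      · intro a ha
        rw [Subgroup.mem_comap, Subgroup.mem_centralizer_singleton_iff, ← map_mul, ← map_mul,
          Subgroup.mem_centralizer_iff.1 ha w0 hw0]
      · intro y hy
        rw [Subgroup.mem_comap, Subgroup.mem_centralizer_singleton_iff]
        have h1 : π y * (w : G ⧸ D) * (π y)⁻¹ = w := congrArg Subtype.val (hw ⟨y, hy⟩)
        rw [← hw0', mul_inv_eq_iff_eq_mul] at h1
        exact h1
    rintro _ ⟨x, hx, rfl⟩
    have := hle hx
    rw [Subgroup.mem_comap, Subgroup.mem_centralizer_singleton_iff] at this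
    exact this
  have hw0N : w0 ∈ N := hCN hw0C
  have hDN : D ≤ N := hDC.trans hCN
  have hDN' : D ≤ N.comap (MonoidHom.id G) := hDN
  let ψ : W →* G ⧸ N :=
    (QuotientGroup.map D N (MonoidHom.id G) hDN').comp W.subtype
  have hψw : ψ w = QuotientGroup.mk w0 := by
    change QuotientGroup.map D N (MonoidHom.id G) hDN' (w : G ⧸ D) = _
    rw [← hw0']; rfl
  have hψ : ∀ y : Y, ψ (φ y v') = QuotientGroup.mk v := by
    intro y
    change (QuotientGroup.mk (y * v * (y : G)⁻¹) : G ⧸ N) = QuotientGroup.mk v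
    have h1 := hh N hN y (hYX y.2) v hv
    rw [← QuotientGroup.eq_one_iff] at h1
    rw [QuotientGroup.mk_mul _ _ (v⁻¹), QuotientGroup.mk_inv, mul_inv_eq_one] at h1
    exact h1
  have h2 : (QuotientGroup.mk w0 : G ⧸ N) = (QuotientGroup.mk v) ^ (Nat.card Y) := by
    have h3 : ∀ s : Finset Y, ψ (∏ y ∈ s, φ y v') = (QuotientGroup.mk v) ^ s.card := by
      classical
      intro s
      induction s using Finset.induction_on with
      | empty => simp
      | insert a s ha ih =>
        rw [Finset.prod_insert ha, map_mul, ih, hψ, Finset.card_insert_of_notMem ha, pow_succ']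
    rw [← hψw, Nat.card_eq_fintype_card]
    exact h3 Finset.univ
  rw [← QuotientGroup.mk_pow] at h2
  rw [← QuotientGroup.eq_one_iff, ← h2, QuotientGroup.eq_one_iff]
  exact hw0N

theorem centralizes_of_mod {G : Type*} [Group G] [Finite G] {q r : ℕ} (hq : q.Prime)
    (hr : r.Prime) (hqr : r ≠ q) {Q R : Subgroup G} [Q.Normal] (hQ : IsPGroup q Q)
    (hR : IsPGroup r R)
    (h : ∀ x ∈ R, ∀ v ∈ Q, x * v * x⁻¹ * v⁻¹ ∈ ⁅Q, Q⁆) :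
    R ≤ Subgroup.centralizer (Q : Set G) := by
  have := Fact.mk hr
  have := Fact.mk hq
  set D := ⁅Q, Q⁆ with hD
  have hDQ : D ≤ Q := Subgroup.commutator_le_right Q Q
  let K : Subgroup Q := (Subgroup.centralizer (R : Set G)).subgroupOf Q
  have hK : K = ⊤ := by
    apply nongen hq hQ
    rw [eq_top_iff]
    rintro ⟨v, hv⟩ -
    let _ : MulAction R {g : G // v⁻¹ * g ∈ D} :=
      { smul := fun r g => ⟨r * g * (r : G)⁻¹, by
          have hg : (g : G) ∈ Q := by
            have := Q.mul_mem hv (hDQ g.2); simpa using this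
          have h1 := h r r.2 g hg
          have h2 : (g : G)⁻¹ * (r * g * (r : G)⁻¹ * (g : G)⁻¹) * (g : G)⁻¹⁻¹ ∈ D :=
            Subgroup.Normal.conj_mem inferInstance _ h1 _
          have := D.mul_mem g.2 h2
          convert this using 1; group⟩
        one_smul := by
          rintro ⟨g, hg⟩; apply Subtype.ext
          change (1 : G) * g * (1 : G)⁻¹ = g
          simp
        mul_smul := by
          rintro a b ⟨g, hg⟩; apply Subtype.ext
          change (a * b : G) * g * (a * b : G)⁻¹ = a * (b * g * (b : G)⁻¹) * (a : G)⁻¹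
          group }
    have hcard : ¬ r ∣ Nat.card {g : G // v⁻¹ * g ∈ D} := by
      have e : {g : G // v⁻¹ * g ∈ D} ≃ D :=
        { toFun := fun g => ⟨v⁻¹ * g, g.2⟩
          invFun := fun d => ⟨v * d, by simp⟩
          left_inv := by rintro ⟨g, hg⟩; simp
          right_inv := by rintro ⟨g, hg⟩; simp }
      rw [Nat.card_congr e]
      obtain ⟨n, hn⟩ := IsPGroup.iff_card.1 (hQ.to_le hDQ)
      rw [hn]
      intro hd
      exact hqr ((Nat.prime_dvd_prime_iff_eq hr hq).1 (hr.dvd_of_dvd_pow hd))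
    obtain ⟨⟨g, hg⟩, hfix⟩ := hR.nonempty_fixed_point_of_prime_not_dvd_card _ hcard
    have hgQ : g ∈ Q := by
      have := Q.mul_mem hv (hDQ hg); simpa using this
    have hgK : (⟨g, hgQ⟩ : Q) ∈ K := by
      change g ∈ Subgroup.centralizer (R : Set G)
      rw [Subgroup.mem_centralizer_iff]
      intro x hx
      have h1 : x * g * x⁻¹ = g := congrArg Subtype.val (hfix ⟨x, hx⟩)
      exact mul_inv_eq_iff_eq_mul.1 h1
    have hd : (⟨g⁻¹ * v, Q.mul_mem (Q.inv_mem hgQ) hv⟩ : Q) ∈ commutator Q := by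
      have h1 : (commutator Q).map Q.subtype = D := by
        rw [commutator_def, Subgroup.map_commutator, ← MonoidHom.range_eq_map, Subgroup.range_subtype]
      have h2 : g⁻¹ * v ∈ (commutator Q).map Q.subtype := by
        rw [h1]
        have := D.inv_mem hg
        simpa using this
      obtain ⟨y, hy, hy'⟩ := h2
      have : y = (⟨g⁻¹ * v, Q.mul_mem (Q.inv_mem hgQ) hv⟩ : Q) := Subtype.ext hy'
      rwa [← this]
    have := Subgroup.mul_mem_sup hgK hd
    convert this using 1
    apply Subtype.ext; simp
  intro x hx
  rw [Subgroup.mem_centralizer_iff]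
  intro v hv
  have : (⟨v, hv⟩ : Q) ∈ K := by rw [hK]; trivial
  have h1 : v ∈ Subgroup.centralizer (R : Set G) := this
  exact (Subgroup.mem_centralizer_iff.1 h1 x hx).symm

theorem coprime_act {G : Type*} [Group G] [Finite G] {q : ℕ} (hq : q.Prime)
    {Q X Y : Subgroup G} [Q.Normal] [X.Normal] (hQ : IsPGroup q Q)
    (hY : Nat.Coprime q (Nat.card Y)) (hYX : Y ≤ X)
    (hX : X ≤ Q ⊔ Subgroup.centralizer (Q : Set G) ⊔ Y)
    (hh : ∀ N, IsChiefFactor Q N → ∀ x ∈ X, ∀ v ∈ Q, x * v * x⁻¹ * v⁻¹ ∈ N) :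
    Y ≤ Subgroup.centralizer (Q : Set G) := by
  have h1 := act_triv_mod hQ hY hYX hX hh
  apply le_of_sylows
  intro r hr
  have := Fact.mk hr
  let R : Sylow r Y := Classical.arbitrary _
  have hidx : ¬ r ∣ ((R : Subgroup Y).map Y.subtype).relIndex Y := by
    have : ((R : Subgroup Y).map Y.subtype).relIndex Y = (R : Subgroup Y).index := by
      rw [Subgroup.relIndex, Subgroup.subgroupOf, Subgroup.comap_map_eq_self_of_injective
        Y.subtype_injective]
    rw [this]; exact R.not_dvd_index
  have hRY : (R : Subgroup Y).map Y.subtype ≤ Y := Subgroup.map_subtype_le _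
  by_cases hrq : r = q
  · subst hrq
    refine ⟨⊥, ?_, bot_le⟩
    rw [Subgroup.relIndex_bot_left]
    exact (Nat.Prime.coprime_iff_not_dvd hr).1 hY
  · exact ⟨_, hidx, centralizes_of_mod hq hr hrq hQ (R.isPGroup'.map _)
      (fun x hx => h1 x (hYX (hRY hx)))⟩

end Stmt7

namespace Stmt7

theorem char_sSup {H : Type*} [Group H] (S : Set (Subgroup H))
    (h : ∀ φ : H ≃* H, ∀ N ∈ S, N.map φ.toMonoidHom ∈ S) : (sSup S).Characteristic := by
  rw [Subgroup.characteristic_iff_map_le]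
  intro φ
  rw [Subgroup.map_le_iff_le_comap]
  refine sSup_le fun N hN => ?_
  rw [← Subgroup.map_le_iff_le_comap]
  exact le_sSup (h φ N hN)

/-- largest normal `q`-subgroup -/
def Ocore (q : ℕ) (H : Type*) [Group H] : Subgroup H :=
  sSup {N : Subgroup H | N.Normal ∧ IsPGroup q N}

theorem Ocore_char (q : ℕ) (H : Type*) [Group H] : (Ocore q H).Characteristic :=
  char_sSup _ fun φ _ hN =>
    ⟨Subgroup.Normal.map hN.1 _ φ.surjective, hN.2.map _⟩

theorem fitting_char (H : Type*) [Group H] : (fittingSubgroup H).Characteristic := by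
  refine char_sSup _ fun φ N hN => ⟨Subgroup.Normal.map hN.1 _ φ.surjective, ?_⟩
  have := hN.2
  exact Group.nilpotent_of_surjective (φ.toMonoidHom.subgroupMap N)
    (MonoidHom.subgroupMap_surjective _ _)

theorem Ocore_pgroup (q : ℕ) (H : Type*) [Group H] : IsPGroup q (Ocore q H) :=
  Sylow.sSup_of_normal _ (fun _ h => h.2) (fun _ h => h.1)

theorem Ocore_le {q : ℕ} (hq : q.Prime) (H : Type*) [Group H] [Finite H] :
    Ocore q H ≤ fittingSubgroup H := by
  have := Fact.mk hq
  exact sSup_le fun N hN => le_sSup ⟨hN.1, hN.2.isNilpotent⟩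

theorem nil_coprime {q : ℕ} (hq : q.Prime) {H : Type*} [Group H] [Finite H] (N : Subgroup H)
    [N.Normal] [Group.IsNilpotent N] : ¬ q ∣ (Ocore q H).relIndex N := by
  have := Fact.mk hq
  let P : Sylow q N := Classical.arbitrary _
  have hn : P.Normal := P.normal_of_normalizerCondition Group.normalizerCondition_of_isNilpotent
  have hc : (P : Subgroup N).Characteristic := Sylow.characteristic_of_normal P hn
  have hle : (P : Subgroup N).map N.subtype ≤ Ocore q H :=
    le_sSup ⟨inferInstance, P.isPGroup'.map _⟩
  intro hd
  have h1 := hd.trans (Subgroup.relIndex_dvd_of_le_left N hle)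
  rw [Subgroup.relIndex, Subgroup.subgroupOf, Subgroup.comap_map_eq_self_of_injective
    N.subtype_injective] at h1
  exact P.not_dvd_index h1

theorem fit_coprime {q : ℕ} (hq : q.Prime) (H : Type*) [Group H] [Finite H] :
    ¬ q ∣ (Ocore q H).relIndex (fittingSubgroup H) := by
  have hOc := Ocore_char q H
  set O := Ocore q H with hO
  let S : Set (Subgroup H) := {M | M.Normal ∧ ¬ q ∣ O.relIndex M}
  have hS : O ∈ S := ⟨inferInstance, by rw [Subgroup.relIndex_self]; exact hq.one_lt.ne' ∘ Nat.dvd_one.1⟩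
  obtain ⟨M, hOM, ⟨hMn, hMq⟩, hmax⟩ := (Set.toFinite S).exists_le_maximal hS
  have key : fittingSubgroup H ≤ M := by
    refine sSup_le fun N hN => ?_
    have hNn := hN.1
    have := hN.2
    have h1 : ¬ q ∣ O.relIndex N := nil_coprime hq N
    have h2 : N ⊔ M ∈ S := by
      refine ⟨inferInstance, ?_⟩
      rw [← Subgroup.relIndex_mul_relIndex O M (N ⊔ M) hOM le_sup_right,
        Subgroup.relIndex_sup_right, hq.dvd_mul]
      rintro (h | h)
      · exact hMq h
      · exact h1 (h.trans (Subgroup.relIndex_dvd_of_le_left N hOM))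
    exact le_sup_left.trans (hmax h2 le_sup_right)
  intro h
  exact hMq (h.trans (Dvd.intro _ (Subgroup.relIndex_mul_relIndex O _ M (Ocore_le hq H) key)))

section
variable {G : Type*} [Group G] [Finite G] {H : Subgroup G} [H.Normal]

theorem fit_normal (H : Subgroup G) [H.Normal] : (FittingIn H).Normal := by
  have := fitting_char H
  unfold FittingIn; infer_instance

theorem fit_le (H : Subgroup G) : FittingIn H ≤ H := Subgroup.map_subtype_le _

/-- normal Sylow subgroup of the Fitting subgroup -/
def fs (q : ℕ) (H : Subgroup G) : Subgroup G := (Ocore q H).map H.subtype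

theorem fs_normal (q : ℕ) (H : Subgroup G) [H.Normal] : (fs q H).Normal := by
  have := Ocore_char q H
  unfold fs; infer_instance

theorem fs_pgroup (q : ℕ) (H : Subgroup G) : IsPGroup q (fs q H) := (Ocore_pgroup q H).map _

theorem fs_le {q : ℕ} (hq : q.Prime) (H : Subgroup G) : fs q H ≤ FittingIn H :=
  Subgroup.map_mono (Ocore_le hq H)

theorem fs_coprime {q : ℕ} (hq : q.Prime) (H : Subgroup G) :
    ¬ q ∣ (fs q H).relIndex (FittingIn H) := by
  unfold fs FittingIn
  rw [Subgroup.relIndex_map_map_of_injective _ _ H.subtype_injective]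
  exact fit_coprime hq H

theorem fs_sylow {q : ℕ} (hq : q.Prime) (H : Subgroup G) : IsSylowIn q (fs q H) (FittingIn H) :=
  ⟨fs_le hq H, fs_pgroup q H, fs_coprime hq H⟩

theorem le_fs {q : ℕ} (H : Subgroup G) {R : Subgroup G} (hR : R.Normal) (hRq : IsPGroup q R)
    (hRH : R ≤ H) : R ≤ fs q H := by
  have : R.subgroupOf H ≤ Ocore q H := le_sSup ⟨inferInstance, hRq.comap_subtype⟩
  have h2 := Subgroup.map_mono (f := H.subtype) this
  rwa [Subgroup.subgroupOf_map_subtype, inf_eq_left.2 hRH] at h2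

theorem fs_comm {q s : ℕ} (hq : q.Prime) (hs : s.Prime) (hne : q ≠ s) (H : Subgroup G) [H.Normal] :
    fs s H ≤ Subgroup.centralizer (fs q H : Set G) := by
  have := Fact.mk hq
  have := Fact.mk hs
  intro x hx
  rw [Subgroup.mem_centralizer_iff]
  intro y hy
  exact Subgroup.commute_of_normal_of_disjoint _ _ (fs_normal q H) (fs_normal s H)
    (IsPGroup.disjoint_of_ne q s hne _ _ (fs_pgroup q H) (fs_pgroup s H)) y x hy hx

theorem fit_le_cent {q : ℕ} (hq : q.Prime) (H : Subgroup G) [H.Normal] :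
    FittingIn H ≤ fs q H ⊔ Subgroup.centralizer (fs q H : Set G) := by
  apply le_of_sylows
  intro r hr
  refine ⟨fs r H, fs_coprime hr H, ?_⟩
  by_cases h : q = r
  · subst h; exact le_sup_left
  · exact (fs_comm hq hr h H).trans le_sup_right

/-- the Fitting subgroup and the derived subgroup act trivially on the heads -/
theorem fit_le_hcent {q : ℕ} (hq : q.Prime) (H : Subgroup G) [H.Normal] {N : Subgroup G}
    [N.Normal] (hN : N.relIndex (fs q H) = q) : FittingIn H ≤ hcent (fs q H) N := by
  refine (fit_le_cent hq H).trans (sup_le ?_ ?_)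
  · have hn := fs_normal q H
    rw [Subgroup.relIndex, Subgroup.index_eq_card] at hN
    have := Fact.mk hq
    have : IsCyclic (fs q H ⧸ N.subgroupOf (fs q H)) := isCyclic_of_prime_card hN
    let _ := IsCyclic.commGroup (α := fs q H ⧸ N.subgroupOf (fs q H))
    intro g hg
    rw [mem_hcent]
    intro v hv
    let g' : fs q H := ⟨g, hg⟩
    let v' : fs q H := ⟨v, hv⟩
    have : g' * v' * g'⁻¹ * v'⁻¹ ∈ N.subgroupOf (fs q H) := by
      rw [← QuotientGroup.eq_one_iff]
      simp only [QuotientGroup.mk_mul, QuotientGroup.mk_inv]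
      rw [mul_comm (g' : fs q H ⧸ N.subgroupOf (fs q H))]; group
    exact this
  · intro g hg
    rw [mem_hcent]
    intro v hv
    rw [← Subgroup.mem_centralizer_iff.1 hg v hv]
    simp

end

end Stmt7

namespace Stmt7

theorem perfect_le {G : Type*} [Group G] {A F : Subgroup G} [F.Normal] (hA : Group.IsSolvable A)
    (h : ⁅A, A⁆ ⊔ F = A) : A ≤ F := by
  let π := QuotientGroup.mk' F
  let B := A.map π
  have hB : Group.IsSolvable B :=
    Group.isSolvable_of_surjective (f := π.subgroupMap A) (MonoidHom.subgroupMap_surjective _ _)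
  have hBB : ⁅B, B⁆ = B := by
    rw [← Subgroup.map_commutator]
    have h1 := congrArg (Subgroup.map π) h
    rw [Subgroup.map_sup, (Subgroup.map_eq_bot_iff F).2 (by rw [QuotientGroup.ker_mk']),
      sup_bot_eq] at h1
    exact h1
  have hbot : B = ⊥ := by
    by_contra hne
    have := (Subgroup.nontrivial_iff_ne_bot B).2 hne
    have h1 := Group.IsSolvable.commutator_lt_top_of_nontrivial B
    apply h1.ne
    apply Subgroup.map_injective B.subtype_injective
    rw [Subgroup.map_subtype_commutator, hBB, ← MonoidHom.range_eq_map, B.range_subtype]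
  have := (Subgroup.map_eq_bot_iff A).1 hbot
  rwa [QuotientGroup.ker_mk'] at this

/-- elements of `A` having an `r`-power in `F` -/
def rpart {G : Type*} [Group G] (r : ℕ) (A F : Subgroup G) [A.Normal] [F.Normal]
    (h : ⁅A, A⁆ ≤ F) : Subgroup G where
  carrier := {x | x ∈ A ∧ ∃ k : ℕ, x ^ (r ^ k) ∈ F}
  one_mem' := ⟨A.one_mem, 0, by simp⟩
  inv_mem' := by
    rintro x ⟨hx, k, hk⟩
    exact ⟨A.inv_mem hx, k, by rw [inv_pow]; exact F.inv_mem hk⟩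
  mul_mem' := by
    rintro x y ⟨hx, k, hk⟩ ⟨hy, l, hl⟩
    refine ⟨A.mul_mem hx hy, k + l, ?_⟩
    have hc : Commute (QuotientGroup.mk x : G ⧸ F) (QuotientGroup.mk y) := by
      have h1 : x * y * x⁻¹ * y⁻¹ ∈ F := h (Subgroup.commutator_mem_commutator hx hy)
      rw [← QuotientGroup.eq_one_iff] at h1
      simp only [QuotientGroup.mk_mul, QuotientGroup.mk_inv] at h1
      rwa [mul_inv_eq_one, mul_inv_eq_iff_eq_mul] at h1
    rw [← QuotientGroup.eq_one_iff, QuotientGroup.mk_pow] at hk hl ⊢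
    rw [QuotientGroup.mk_mul, hc.mul_pow, pow_add, pow_mul, hk, mul_comm, pow_mul, hl]
    simp

theorem rpart_normal {G : Type*} [Group G] (r : ℕ) (A F : Subgroup G) [A.Normal] [F.Normal]
    (h : ⁅A, A⁆ ≤ F) : (rpart r A F h).Normal := by
  constructor
  rintro x ⟨hx, k, hk⟩ g
  refine ⟨Subgroup.Normal.conj_mem inferInstance x hx g, k, ?_⟩
  rw [conj_pow]
  exact Subgroup.Normal.conj_mem inferInstance _ hk g

theorem comm_le {G : Type*} [Group G] [Finite G] (H : Subgroup G) [H.Normal] (hH : Group.IsSolvable H)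
    (hh : ∀ q : ℕ, q.Prime → ∀ N, IsChiefFactor (fs q H) N → ∀ x ∈ commutator G ⊔ FittingIn H,
      ∀ v ∈ fs q H, x * v * x⁻¹ * v⁻¹ ∈ N) :
    commutator G ⊓ H ≤ FittingIn H := by
  by_contra hne
  have hFn := fit_normal H
  have hFH := fit_le H
  set F := FittingIn H with hF
  let K := (commutator G ⊓ H) ⊔ F
  have hKn : K.Normal := inferInstance
  have hKH : K ≤ H := sup_le inf_le_right hFH
  let S : Set (Subgroup G) := {A | A.Normal ∧ F < A ∧ A ≤ K}
  have hKS : K ∈ S := ⟨hKn, lt_of_le_of_ne le_sup_right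
    (fun h => hne (le_sup_left.trans h.symm.le)), le_rfl⟩
  obtain ⟨A, -, ⟨hAn, hFA, hAK⟩, hmin⟩ := (Set.toFinite S).exists_le_minimal hKS
  have hAH : A ≤ H := hAK.trans hKH
  have hAs : Group.IsSolvable A := Group.isSolvable_of_isSolvable_injective (Subgroup.inclusion_injective hAH)
  have hAA : ⁅A, A⁆ ≤ F := by
    by_contra h
    have h1 : ⁅A, A⁆ ⊔ F ≤ A := sup_le (Subgroup.commutator_le_left A A) hFA.le
    have h2 : ⁅A, A⁆ ⊔ F ∈ S := ⟨inferInstance, lt_of_le_of_ne le_sup_right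
      (fun h' => h (le_sup_left.trans h'.symm.le)), h1.trans hAK⟩
    exact not_le_of_gt hFA (perfect_le hAs (le_antisymm h1 (hmin h2 h1)))
  have hne1 : F.relIndex A ≠ 1 := fun h => not_le_of_gt hFA (Subgroup.relIndex_eq_one.1 h)
  obtain ⟨r, hr, hrd⟩ := Nat.exists_prime_and_dvd hne1
  have := Fact.mk hr
  have hB : A ≤ rpart r A F hAA := by
    have h1 : rpart r A F hAA ≤ A := fun x hx => hx.1
    refine hmin ⟨rpart_normal r A F hAA, ?_, h1.trans hAK⟩ h1
    refine lt_of_le_not_ge (fun x hx => ⟨hFA.le hx, 0, by simpa using hx⟩) ?_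
    intro h2
    rw [Subgroup.relIndex, Subgroup.index_eq_card] at hrd
    obtain ⟨x, hx⟩ := exists_prime_orderOf_dvd_card' r hrd
    obtain ⟨a, rfl⟩ := QuotientGroup.mk_surjective x
    have h3 : (a : G) ∈ F := by
      apply h2
      refine ⟨a.2, 1, ?_⟩
      have h4 := pow_orderOf_eq_one (a : A ⧸ F.subgroupOf A)
      rw [hx, ← QuotientGroup.mk_pow, QuotientGroup.eq_one_iff] at h4
      rw [pow_one]
      exact h4
    have h5 : (a : A ⧸ F.subgroupOf A) = 1 := (QuotientGroup.eq_one_iff a).2 h3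
    rw [h5, orderOf_one] at hx
    exact hr.one_lt.ne hx
  have hpow : ∃ k, F.relIndex A = r ^ k := by
    rw [Subgroup.relIndex, Subgroup.index_eq_card, ← IsPGroup.iff_card]
    intro x
    obtain ⟨a, rfl⟩ := QuotientGroup.mk_surjective x
    obtain ⟨k, hk⟩ := (hB a.2).2
    refine ⟨k, ?_⟩
    rw [← QuotientGroup.mk_pow, QuotientGroup.eq_one_iff]
    exact hk
  let P : Sylow r A := Classical.arbitrary _
  let R : Subgroup G := (P : Subgroup A).map A.subtype
  have hRA : R ≤ A := Subgroup.map_subtype_le _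
  have hRp : IsPGroup r R := P.isPGroup'.map _
  have hRsub : R.subgroupOf A = P := Subgroup.comap_map_eq_self_of_injective A.subtype_injective _
  have hRi : ¬ r ∣ R.relIndex A := by
    rw [Subgroup.relIndex, hRsub]; exact P.not_dvd_index
  have hAR : A ≤ F ⊔ R := by
    rw [← Subgroup.relIndex_eq_one]
    obtain ⟨k, hk⟩ := hpow
    have h1 : (F ⊔ R).relIndex A ∣ r ^ k := hk ▸ Subgroup.relIndex_dvd_of_le_left A le_sup_left
    have h2 : (F ⊔ R).relIndex A ∣ R.relIndex A := Subgroup.relIndex_dvd_of_le_left A le_sup_right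
    exact Nat.eq_one_of_dvd_coprimes (((Nat.Prime.coprime_iff_not_dvd hr).2 hRi).pow_left k) h1 h2
  have hcent : ∀ s : ℕ, s.Prime → s ≠ r → R ≤ Subgroup.centralizer (fs s H : Set G) := by
    intro s hs hsr
    have := fs_normal s H
    obtain ⟨n, hn⟩ := IsPGroup.iff_card.1 hRp
    refine coprime_act (X := A) hs (fs_pgroup s H) ?_ hRA ?_ ?_
    · rw [hn]; exact ((Nat.coprime_primes hs hr).2 hsr).pow_right n
    · exact hAR.trans (sup_le_sup_right (fit_le_cent hs H) R)
    · intro N hN x hx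
      exact hh s hs N hN x ((hAK.trans (sup_le_sup_right inf_le_left F)) hx)
  have hPn : (P : Subgroup A).Normal := by
    rw [← hRsub, Subgroup.normal_subgroupOf_iff_le_normalizer hRA]
    refine hAR.trans (sup_le ?_ Subgroup.le_normalizer)
    apply le_of_sylows
    intro s hs
    refine ⟨fs s H, fs_coprime hs H, ?_⟩
    by_cases hsr : s = r
    · subst hsr
      refine le_trans ?_ Subgroup.le_normalizer
      have := fs_normal s H
      have hle : fs s H ≤ A := (fs_le hs H).trans hFA.le
      have h1 : (fs s H).subgroupOf A ≤ P :=
        IsPGroup.le_sylow_of_normal ((fs_pgroup s H).comap_subtype) P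
      have h2 := Subgroup.map_mono (f := A.subtype) h1
      rwa [Subgroup.subgroupOf_map_subtype, inf_eq_left.2 hle] at h2
    · exact (Subgroup.le_centralizer_iff.1 (hcent s hs hsr)).trans
        (Subgroup.centralizer_le_normalizer _)
  have hPc : (P : Subgroup A).Characteristic := Sylow.characteristic_of_normal P hPn
  have hRn : R.Normal := inferInstanceAs ((P : Subgroup A).map A.subtype).Normal
  have hRF : R ≤ F := (le_fs H hRn hRp (hRA.trans hAH)).trans (fs_le hr H)
  exact not_le_of_gt hFA (hAR.trans (sup_le le_rfl hRF))

end Stmt7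

namespace Stmt7

theorem relIndex_dvd_mono {G : Type*} [Group G] [Finite G] (N : Subgroup G) [N.Normal]
    {U V : Subgroup G} (h : U ≤ V) : N.relIndex U ∣ N.relIndex V := by
  have h1 : ∀ U : Subgroup G, N.relIndex U = Nat.card (U.map (QuotientGroup.mk' N)) := by
    intro U
    rw [← Subgroup.relIndex_ker, QuotientGroup.ker_mk']
  rw [h1, h1]
  exact Subgroup.card_dvd_of_le (Subgroup.map_mono h)

theorem lift_pnil {G : Type*} [Group G] [Finite G] {p : ℕ} (hp : p.Prime) (N : Subgroup G)
    [N.Normal] (h : IsPNilpotent p (G ⧸ N)) :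
    ∃ X : Subgroup G, X.Normal ∧ ¬ p ∣ N.relIndex X ∧ ∃ k, X.index = p ^ k := by
  obtain ⟨Y, hYn, hY, k, hk⟩ := h
  refine ⟨Y.comap (QuotientGroup.mk' N), inferInstance, ?_, k, ?_⟩
  · have h1 : N.relIndex (Y.comap (QuotientGroup.mk' N)) = Nat.card Y := by
      have h2 := Subgroup.relIndex_ker (Y.comap (QuotientGroup.mk' N)) (QuotientGroup.mk' N)
      rwa [QuotientGroup.ker_mk', Subgroup.map_comap_eq_self_of_surjective
        (QuotientGroup.mk'_surjective N)] at h2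
    rw [h1]
    exact (Nat.Prime.coprime_iff_not_dvd hp).1 hY.symm
  · rw [Subgroup.index_comap_of_surjective _ (QuotientGroup.mk'_surjective N), hk]

theorem abel_pnil {p : ℕ} (hp : p.Prime) (A : Type*) [CommGroup A] [Finite A] :
    IsPNilpotent p A := by
  have := Fact.mk hp
  let P : Sylow p A := Classical.arbitrary _
  obtain ⟨Y, hY⟩ := Subgroup.exists_right_complement'_of_coprime P.card_coprime_index
  obtain ⟨n, hn⟩ := IsPGroup.iff_card.1 P.isPGroup'
  refine ⟨Y, inferInstance, ?_, n, ?_⟩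
  · rw [← hY.symm.index_eq_card]
    exact ((Nat.Prime.coprime_iff_not_dvd hp).2 P.not_dvd_index).symm
  · rw [hY.index_eq_card]; exact hn

theorem exists_X {G : Type*} [Group G] [Finite G] {p : ℕ} (hp : p.Prime) (H F : Subgroup G)
    [H.Normal] [F.Normal] (h : IsPNilpotent p (G ⧸ H)) (hF : commutator G ⊓ H ≤ F) :
    ∃ X : Subgroup G, X.Normal ∧ F ≤ X ∧ ¬ p ∣ F.relIndex X ∧ ∃ k, X.index = p ^ k := by
  obtain ⟨X1, h1n, h1, a, ha⟩ := lift_pnil hp H h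
  obtain ⟨X2, h2n, h2, b, hb⟩ := lift_pnil hp (commutator G) (abel_pnil hp (Abelianization G))
  refine ⟨(X1 ⊓ X2) ⊔ F, inferInstance, le_sup_right, ?_, ?_⟩
  · rw [Subgroup.relIndex_sup_right]
    intro hd
    have h3 := hd.trans (Subgroup.relIndex_dvd_of_le_left (X1 ⊓ X2) hF)
    rw [← Subgroup.relIndex_inf_mul_relIndex, hp.dvd_mul] at h3
    rcases h3 with h3 | h3
    · exact h2 (h3.trans (relIndex_dvd_mono _ (inf_le_right.trans inf_le_right)))
    · exact h1 (h3.trans (relIndex_dvd_mono _ inf_le_left))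
  · have h3 : (X1 ⊓ X2).index ∣ p ^ (b + a) := by
      rw [← Subgroup.relIndex_mul_index (inf_le_left : X1 ⊓ X2 ≤ X1), Subgroup.inf_relIndex_left,
        pow_add, ha]
      exact mul_dvd_mul_right (hb ▸ Subgroup.relIndex_dvd_index_of_normal X2 X1) _
    obtain ⟨k, -, hk⟩ := (Nat.dvd_prime_pow hp).1
      ((Subgroup.index_dvd_of_le (le_sup_left : X1 ⊓ X2 ≤ (X1 ⊓ X2) ⊔ F)).trans h3)
    exact ⟨k, hk⟩

theorem finish {G : Type*} [Group G] [Finite G] {p : ℕ} (hp : p.Prime) (P X : Subgroup G)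
    [P.Normal] [X.Normal] (hP : IsPGroup p P) (hPX : P ≤ X) (hX : ¬ p ∣ P.relIndex X)
    (hXi : ∃ k, X.index = p ^ k)
    (hh : ∀ N, IsChiefFactor P N → ∀ x ∈ X, ∀ v ∈ P, x * v * x⁻¹ * v⁻¹ ∈ N) :
    IsPNilpotent p G := by
  have := Fact.mk hp
  obtain ⟨n, hn⟩ := IsPGroup.iff_card.1 hP
  obtain ⟨k, hk⟩ := hXi
  have hcard : Nat.card (P.subgroupOf X) = p ^ n := by
    rw [← hn]; exact Nat.card_congr (Subgroup.subgroupOfEquivOfLe hPX).toEquiv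
  have hcop : Nat.Coprime (Nat.card (P.subgroupOf X)) (P.subgroupOf X).index := by
    rw [hcard]
    exact ((Nat.Prime.coprime_iff_not_dvd hp).2 hX).pow_left n
  obtain ⟨Y0, hY0⟩ := Subgroup.exists_right_complement'_of_coprime hcop
  let Y : Subgroup G := Y0.map X.subtype
  have hYX : Y ≤ X := Subgroup.map_subtype_le _
  have hYsub : Y.subgroupOf X = Y0 := Subgroup.comap_map_eq_self_of_injective X.subtype_injective _
  have hYcard : Nat.card Y = P.relIndex X := by
    rw [Subgroup.relIndex, hY0.symm.index_eq_card]
    exact Subgroup.card_map_of_injective X.subtype_injective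
  have hpY : Nat.Coprime p (Nat.card Y) := by
    rw [hYcard]; exact (Nat.Prime.coprime_iff_not_dvd hp).2 hX
  have hYi : Y.relIndex X = p ^ n := by
    rw [Subgroup.relIndex, hYsub, hY0.index_eq_card, hcard]
  have hXPY : X ≤ P ⊔ Y := by
    have h1 := congrArg (Subgroup.map X.subtype) hY0.sup_eq_top
    rw [Subgroup.map_sup, Subgroup.subgroupOf_map_subtype, inf_eq_left.2 hPX,
      ← MonoidHom.range_eq_map, X.range_subtype] at h1
    exact h1.symm.le
  have hYc : Y ≤ Subgroup.centralizer (P : Set G) :=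
    coprime_act hp hP hpY hYX (hXPY.trans (sup_le_sup_right le_sup_left Y)) hh
  have hY0n : Y0.Normal := by
    rw [← hYsub, Subgroup.normal_subgroupOf_iff_le_normalizer hYX]
    exact hXPY.trans (sup_le ((Subgroup.le_centralizer_iff.1 hYc).trans
      (Subgroup.centralizer_le_normalizer _)) Subgroup.le_normalizer)
  refine ⟨Y, ⟨?_⟩, hpY.symm, n + k, ?_⟩
  · intro y hy g
    have hz : g * y * g⁻¹ ∈ X := Subgroup.Normal.conj_mem inferInstance y (hYX hy) g
    let z : X := ⟨g * y * g⁻¹, hz⟩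
    have h1 : z ^ Y0.index ∈ Y0 := Subgroup.pow_index_mem Y0 z
    have h2 : orderOf z ∣ Nat.card Y := by
      rw [orderOf_dvd_iff_pow_eq_one]
      apply Subtype.ext
      change (g * y * g⁻¹) ^ Nat.card Y = 1
      have h3 : (⟨y, hy⟩ : Y) ^ Nat.card Y = 1 := pow_card_eq_one'
      have h4 : y ^ Nat.card Y = 1 := congrArg Subtype.val h3
      rw [conj_pow, h4]; simp
    have h5 : Nat.Coprime Y0.index (orderOf z) := by
      rw [hY0.index_eq_card, hcard]
      exact (hpY.coprime_dvd_right h2).pow_left n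
    obtain ⟨m, hm⟩ := exists_pow_eq_self_of_coprime h5
    have h6 : z ∈ Y0 := by rw [← hm]; exact Y0.pow_mem h1 m
    exact ⟨z, h6, rfl⟩
  · rw [← Subgroup.relIndex_mul_index hYX, hYi, hk, pow_add]

theorem backward {G : Type*} [Group G] [Finite G] {p : ℕ} (hp : p.Prime)
    (hcop : Nat.Coprime (Nat.card G) (p - 1)) (H : Subgroup G) [H.Normal] (hH : Group.IsSolvable H)
    (hpn : IsPNilpotent p (G ⧸ H))
    (hus : ∀ q : ℕ, q.Prime → ∀ Q : Subgroup G, IsSylowIn q Q (FittingIn H) →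
      ∀ M : Subgroup G, IsMaximalIn M Q → UsQuasinormal M) : IsPNilpotent p G := by
  have hFn := fit_normal H
  have hd : ∀ q : ℕ, q.Prime → ∀ N, IsChiefFactor (fs q H) N → N.relIndex (fs q H) = q :=
    fun q hq N hN => head_prime hq (fs_pgroup q H) hN (hus q hq _ (fs_sylow hq H))
  have hc : commutator G ⊓ H ≤ FittingIn H := by
    refine comm_le H hH ?_
    intro q hq N hN x hx
    have := hN.1
    have := hN.2.1
    exact mem_hcent.1 ((sup_le (head_act hq (hd q hq N hN)).1
      (fit_le_hcent hq H (hd q hq N hN)) : commutator G ⊔ FittingIn H ≤ hcent (fs q H) N) hx)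
  obtain ⟨X, hXn, hFX, hX, hXi⟩ := exists_X hp H (FittingIn H) hpn hc
  have := fs_normal p H
  refine finish hp (fs p H) X (fs_pgroup p H) ((fs_le hp H).trans hFX) ?_ hXi ?_
  · rw [← Subgroup.relIndex_mul_relIndex _ _ _ (fs_le hp H) hFX, hp.dvd_mul]
    rintro (h | h)
    · exact fs_coprime hp H h
    · exact hX h
  · intro N hN x _
    have := hN.2.1
    apply mem_hcent.1
    rw [(head_act hp (hd p hp N hN)).2 hcop]
    trivial

theorem forward {G : Type*} [Group G] [Finite G] {p : ℕ} (h : IsPNilpotent p G) :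
    ∃ H : Subgroup G, ∃ _ : H.Normal, IsSolvable H ∧ IsPNilpotent p (G ⧸ H) ∧
        ∀ q : ℕ, q.Prime → ∀ Q : Subgroup G, IsSylowIn q Q (FittingIn H) →
          ∀ M : Subgroup G, IsMaximalIn M Q → UsQuasinormal M := by
  refine ⟨⊥, inferInstance, inferInstanceAs (Group.IsSolvable (⊥ : Subgroup G)), ?_, ?_⟩
  · obtain ⟨N, hN, h1, k, hk⟩ := h
    have hs := QuotientGroup.mk'_surjective (⊥ : Subgroup G)
    refine ⟨N.map (QuotientGroup.mk' ⊥), Subgroup.Normal.map hN _ hs, ?_, k, ?_⟩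
    · exact h1.coprime_dvd_left (Subgroup.card_map_dvd _ _)
    · rw [Subgroup.index_map_eq _ hs (by rw [QuotientGroup.ker_mk']; exact bot_le), hk]
  · intro q _ Q hQ M hM
    have h1 : Q = ⊥ := le_bot_iff.1 (hQ.1.trans (fit_le _))
    rw [h1] at hM
    exact absurd hM.1 not_lt_bot

end Stmt7
/-- If `p ∣ |G|` and `gcd(|G|, p-1) = 1`, then `G` is `p`-nilpotent iff
`G` has a soluble normal subgroup `H` such that `G/H` is `p`-nilpotent and every maximal
subgroup of every Sylow subgroup of `F(H)` is 𝔘ₛ-quasinormal in `G`. -/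
theorem stmt_7 {G : Type*} [Group G] [Finite G] (p : ℕ) (hp : p.Prime)
    (hpdvd : p ∣ Nat.card G) (hcop : Nat.Coprime (Nat.card G) (p - 1)) :
    IsPNilpotent p G ↔
      ∃ H : Subgroup G, ∃ _ : H.Normal, IsSolvable H ∧ IsPNilpotent p (G ⧸ H) ∧
        ∀ q : ℕ, q.Prime → ∀ Q : Subgroup G, IsSylowIn q Q (FittingIn H) →
          ∀ M : Subgroup G, IsMaximalIn M Q → UsQuasinormal M := by
  constructor
  · exact Stmt7.forward
  · rintro ⟨H, hHn, hH, hpn, hus⟩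
    exact Stmt7.backward hp hcop H hH hpn hus
end
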